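/- arXiv:2404.18690 — 5 statements merged into one kernel-verified Lean document; each statement's English description precedes it below -/
import Mathlib

section
/- Suppose the pair (𝒫,𝒟) satisfies conditions (T1)–(T3) and that only finitely many n satisfy Φ(n) ≥ 3. Then the Moran measure μ_{𝒫,𝒟} is a spectral measure. -/
open MeasureTheory Filter Finset Real
open scoped ENNReal NNReal

noncomputable section

/-- `P n = p 1 * p 2 * ⋯ * p n`. -/
def Pprod (p : ℕ → ℕ) (n : ℕ) : ℕ := ∏ i ∈ Finset.Icc 1 n, p i

/-- The uniform probability measure on the finite set `s • E ⊆ ℝ`. -/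
def unifD (E : Finset ℕ) (s : ℝ) : Measure ℝ :=
  (E.card : ℝ≥0∞)⁻¹ • ∑ d ∈ E, Measure.dirac (s * (d : ℝ))

/-- The finite convolutions `μ_n = δ_{P₁⁻¹D₁} ∗ ⋯ ∗ δ_{Pₙ⁻¹Dₙ}`. -/
def muN (p : ℕ → ℕ) (D : ℕ → Finset ℕ) : ℕ → Measure ℝ
  | 0 => Measure.dirac 0
  | n + 1 => Measure.conv (muN p D n) (unifD (D (n + 1)) ((Pprod p (n + 1) : ℝ)⁻¹))

/-- `μ` is the weak limit of the sequence of measures `ν n`. -/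
def IsWeakLimit (ν : ℕ → Measure ℝ) (μ : Measure ℝ) : Prop :=
  ∀ f : BoundedContinuousFunction ℝ ℝ,
    Tendsto (fun n => ∫ x, f x ∂ν n) atTop (nhds (∫ x, f x ∂μ))

/-- `μ` is the Moran measure attached to `(p, D)`: the infinite convolution
`δ_{P₁⁻¹D₁} ∗ δ_{P₂⁻¹D₂} ∗ ⋯`, in the sense of weak convergence. -/
def IsMoran (p : ℕ → ℕ) (D : ℕ → Finset ℕ) (μ : Measure ℝ) : Prop :=
  IsProbabilityMeasure μ ∧ IsWeakLimit (muN p D) μ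

/-- The exponentials `e_λ, λ ∈ Λ` are pairwise orthogonal in `L²(μ)`. -/
def IsOrthSet (μ : Measure ℝ) (Λ : Set ℝ) : Prop :=
  ∀ l ∈ Λ, ∀ l' ∈ Λ, l ≠ l' →
    ∫ x : ℝ, Complex.exp (2 * Real.pi * Complex.I * (l - l') * x) ∂μ = 0

/-- `Λ` is a spectrum of `μ`: the exponentials `e_λ, λ ∈ Λ` form an orthonormal
basis of `L²(μ)` (orthonormal + maximal, i.e. complete). -/
def IsSpectrum (μ : Measure ℝ) (Λ : Set ℝ) : Prop :=
  IsOrthSet μ Λ ∧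
  ∀ f : ℝ → ℂ, MemLp f 2 μ →
    (∀ l ∈ Λ, ∫ x : ℝ, f x * Complex.exp (-(2 * Real.pi * Complex.I * l * x)) ∂μ = 0) →
    f =ᵐ[μ] 0

def IsSpectralMeasure (μ : Measure ℝ) : Prop := ∃ Λ : Set ℝ, Λ.Countable ∧ IsSpectrum μ Λ

/-- Condition (T1): `D n = {0,1,…,N-1}` with `3 < N`, `N ∣ p n`, `N < p n`. -/
def T1cond (p : ℕ → ℕ) (D : ℕ → Finset ℕ) (n : ℕ) : Prop :=
  ∃ N : ℕ, 3 < N ∧ N ∣ p n ∧ N < p n ∧ D n = Finset.range N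

/-- Condition (T2) (except for the global sup condition): `D n = {0,a,b}`,
`0 < a < b`, `gcd(a,b) = 1`, `{a,b} ≡ {1,2} (mod 3)`, `3 ∣ p n`. -/
def T2cond (p : ℕ → ℕ) (D : ℕ → Finset ℕ) (n : ℕ) : Prop :=
  ∃ a b : ℕ, 0 < a ∧ a < b ∧ Nat.gcd a b = 1 ∧
    (a % 3 = 1 ∧ b % 3 = 2 ∨ a % 3 = 2 ∧ b % 3 = 1) ∧ 3 ∣ p n ∧
    D n = ({0, a, b} : Finset ℕ)

/-- Condition (T3): `D n = {0,d}` with `0 < d < p n` and `p n / gcd (d, p n)` even.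
(The decomposition `d = 2^l d'` with `d'` odd always exists, with `l` the 2-adic
valuation of `d`.) -/
def T3cond (p : ℕ → ℕ) (D : ℕ → Finset ℕ) (n : ℕ) : Prop :=
  ∃ d : ℕ, 0 < d ∧ d < p n ∧ 2 ∣ p n / Nat.gcd d (p n) ∧ D n = ({0, d} : Finset ℕ)

/-- The pair `(p, D)` satisfies conditions (T1)–(T3), including the requirement
`sup {b n / p n : n of type (T2)} < 2/3`. -/
def SatisfiesT (p : ℕ → ℕ) (D : ℕ → Finset ℕ) : Prop :=
  (∀ n, 1 ≤ n → T1cond p D n ∨ T2cond p D n ∨ T3cond p D n) ∧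
  ∃ c : ℝ, c < 2 / 3 ∧ ∀ n, 1 ≤ n → T2cond p D n → (((D n).sup id : ℕ) : ℝ) / (p n : ℝ) ≤ c

/-- `σ ∈ {-1,1}^ℕ`. -/
def IsSigma (σ : ℕ → ℤ) : Prop := ∀ n, σ n = 1 ∨ σ n = -1

/-- `α` is admissible: `α m ∈ {-⌊N/2⌋, …, N - 1 - ⌊N/2⌋}` where `N = #(D m)`,
for every `m` with `#(D m) = N_m > 3`. -/
def Admissible (D : ℕ → Finset ℕ) (α : ℕ → ℤ) : Prop :=
  ∀ m, 1 ≤ m → 3 < (D m).card →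
    -(((D m).card / 2 : ℕ) : ℤ) ≤ α m ∧
      α m ≤ ((D m).card : ℤ) - 1 - (((D m).card / 2 : ℕ) : ℤ)

/-- The largest element `d n` (resp. `b n`) of `D n`. -/
def bOf (D : ℕ → Finset ℕ) (n : ℕ) : ℕ := (D n).sup id

/-- The middle element `a n` of a digit set `{0, a, b}`. -/
def aOf (D : ℕ → Finset ℕ) (n : ℕ) : ℕ := (((D n).erase 0).erase ((D n).sup id)).sup id

/-- `l n`: the 2-adic valuation of `d n`, i.e. `d n = 2^(l n) * d'` with `d'` odd. -/
def lOf (D : ℕ → Finset ℕ) (n : ℕ) : ℕ := padicValNat 2 ((D n).sup id)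

/-- The finite set `Λ_n^{σ,α}`. -/
def LamN (p : ℕ → ℕ) (D : ℕ → Finset ℕ) (σ α : ℕ → ℤ) (n : ℕ) : Set ℝ :=
  { x | ∃ c : ℕ → ℝ,
      (∀ i, (D i).card = 2 → c i = 0 ∨ c i = (σ i : ℝ) / 2 ^ (1 + lOf D i)) ∧
      (∀ i, (D i).card = 3 → c i = 0 ∨ c i = 1 / 3 ∨ c i = -(1 / 3)) ∧
      (∀ i, 3 < (D i).card → c i = (α i : ℝ) / ((D i).card : ℝ)) ∧
      x = ∑ i ∈ Finset.Icc 1 n, (Pprod p i : ℝ) * c i }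

/-- `Λ^{σ,α} = ⋃_{n ≥ 1} Λ_n^{σ,α}`. -/
def Lam (p : ℕ → ℕ) (D : ℕ → Finset ℕ) (σ α : ℕ → ℤ) : Set ℝ :=
  ⋃ n ∈ Set.Ici 1, LamN p D σ α n

/-- The Fourier transform `μ̂(ξ) = ∫ e^{-2πixξ} dμ(x)`. -/
def FT (μ : Measure ℝ) (ξ : ℝ) : ℂ :=
  ∫ x : ℝ, Complex.exp (-(2 * Real.pi * Complex.I * x * ξ)) ∂μ

/-- The mask polynomial `m_E(t) = (1/#E) ∑_{d ∈ E} e^{2πidt}`. -/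
def mask (E : Finset ℕ) (t : ℝ) : ℂ :=
  (E.card : ℂ)⁻¹ * ∑ d ∈ E, Complex.exp (2 * Real.pi * Complex.I * (d : ℝ) * t)

end

noncomputable section

open Complex in
lemma mask_norm_le (E : Finset ℕ) (t : ℝ) : ‖mask E t‖ ≤ 1 := by
  unfold mask
  rw [norm_mul, norm_inv, Complex.norm_natCast]
  have h : ‖∑ d ∈ E, Complex.exp (2 * Real.pi * Complex.I * (d : ℝ) * t)‖ ≤ E.card := by
    refine (norm_sum_le _ _).trans ?_
    have : ∀ d ∈ E, ‖Complex.exp (2 * Real.pi * Complex.I * (d : ℝ) * t)‖ ≤ 1 := by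
      intro d _
      have : (2 * Real.pi * Complex.I * (d : ℝ) * t : ℂ) = ((2 * Real.pi * d * t : ℝ) : ℂ) * I := by
        push_cast; ring
      rw [this, Complex.norm_exp_ofReal_mul_I]
    simpa using Finset.sum_le_sum this
  rw [inv_mul_eq_div]
  exact div_le_one_of_le₀ h (by positivity)

lemma mask_zero {E : Finset ℕ} (hE : E.Nonempty) : mask E 0 = 1 := by
  unfold mask
  have : (E.card : ℂ) ≠ 0 := by exact_mod_cast hE.card_pos.ne'
  simp [this]

lemma mask_add_int (E : Finset ℕ) (t : ℝ) (k : ℤ) : mask E (t + k) = mask E t := by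
  unfold mask
  congr 1
  refine Finset.sum_congr rfl fun d _ => ?_
  have : (2 * Real.pi * Complex.I * (d : ℝ) * ((t + k : ℝ) : ℂ) : ℂ)
      = 2 * Real.pi * Complex.I * (d : ℝ) * t + ((d * k : ℤ) : ℂ) * (2 * Real.pi * Complex.I) := by
    push_cast; ring
  rw [this, Complex.exp_add, Complex.exp_int_mul_two_pi_mul_I, mul_one]

/-- Fourier transform of the finite convolution. -/
def fh (p : ℕ → ℕ) (D : ℕ → Finset ℕ) (n : ℕ) (ξ : ℝ) : ℂ :=
  ∏ i ∈ Finset.Icc 1 n, mask (D i) (ξ / Pprod p i)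

lemma fh_succ (p : ℕ → ℕ) (D : ℕ → Finset ℕ) (n : ℕ) (ξ : ℝ) :
    fh p D (n + 1) ξ = fh p D n ξ * mask (D (n + 1)) (ξ / Pprod p (n + 1)) := by
  unfold fh
  rw [Finset.prod_Icc_succ_top (by omega)]

lemma fh_zero (p : ℕ → ℕ) (D : ℕ → Finset ℕ) (hne : ∀ n, 1 ≤ n → (D n).Nonempty) (n : ℕ) :
    fh p D n 0 = 1 := by
  unfold fh
  refine Finset.prod_eq_one fun i hi => ?_
  rw [zero_div, mask_zero (hne i (Finset.mem_Icc.1 hi).1)]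

lemma Pprod_succ (p : ℕ → ℕ) (n : ℕ) : Pprod p (n + 1) = Pprod p n * p (n + 1) := by
  unfold Pprod
  rw [Finset.prod_Icc_succ_top (by omega)]

lemma Pprod_pos (p : ℕ → ℕ) (hp : ∀ n, 1 ≤ n → 1 < p n) (n : ℕ) : 0 < Pprod p n := by
  unfold Pprod
  exact Finset.prod_pos fun i hi => by have := hp i (Finset.mem_Icc.1 hi).1; omega

lemma Pprod_dvd (p : ℕ → ℕ) {i n : ℕ} (h : i ≤ n) : Pprod p i ∣ Pprod p n := by
  unfold Pprod
  exact Finset.prod_dvd_prod_of_subset _ _ _ (Finset.Icc_subset_Icc_right h)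

lemma Pprod_ge (p : ℕ → ℕ) (hp : ∀ n, 1 ≤ n → 1 < p n) (n : ℕ) : 2 ^ n ≤ Pprod p n := by
  induction n with
  | zero => simp [Pprod]
  | succ n ih =>
    rw [Pprod_succ, pow_succ]
    exact Nat.mul_le_mul ih (hp (n + 1) (by omega))

lemma fh_add (p : ℕ → ℕ) (hp : ∀ n, 1 ≤ n → 1 < p n) (D : ℕ → Finset ℕ) (n : ℕ) (ξ : ℝ) (k : ℤ) :
    fh p D n (ξ + Pprod p n * k) = fh p D n ξ := by
  unfold fh
  refine Finset.prod_congr rfl fun i hi => ?_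
  obtain ⟨c, hc⟩ := Pprod_dvd p (Finset.mem_Icc.1 hi).2
  have h0 : (Pprod p i : ℝ) ≠ 0 := by exact_mod_cast (Pprod_pos p hp i).ne'
  have : (ξ + Pprod p n * k) / Pprod p i = ξ / Pprod p i + ((c * k : ℤ) : ℝ) := by
    rw [hc]; push_cast; field_simp
  rw [this, mask_add_int]

lemma unifD_prob {E : Finset ℕ} (hE : E.Nonempty) (s : ℝ) : IsProbabilityMeasure (unifD E s) := by
  constructor
  unfold unifD
  have h1 : (E.card : ℝ≥0∞) ≠ 0 := by exact_mod_cast hE.card_pos.ne'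
  simp [ENNReal.inv_mul_cancel h1]

lemma muN_prob (p : ℕ → ℕ) (D : ℕ → Finset ℕ) (hne : ∀ n, 1 ≤ n → (D n).Nonempty) (n : ℕ) :
    IsProbabilityMeasure (muN p D n) := by
  induction n with
  | zero => unfold muN; infer_instance
  | succ n ih =>
    unfold muN
    have := unifD_prob (hne (n + 1) (by omega)) ((Pprod p (n + 1) : ℝ)⁻¹)
    infer_instance

lemma charFun_unifD {E : Finset ℕ} (s ξ : ℝ) :
    charFun (unifD E s) (2 * π * ξ) = mask E (ξ * s) := by
  rw [charFun_apply_real]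
  unfold unifD mask
  rw [integral_smul_measure, integral_finsetSum_measure]
  · simp only [integral_dirac]
    rw [Complex.real_smul]
    congr 1
    · simp
    · refine Finset.sum_congr rfl fun d _ => ?_
      congr 1
      push_cast; ring
  · intro i _
    exact integrable_dirac (by simp)

lemma charFun_muN (p : ℕ → ℕ) (D : ℕ → Finset ℕ) (hne : ∀ n, 1 ≤ n → (D n).Nonempty) (n : ℕ)
    (ξ : ℝ) : charFun (muN p D n) (2 * π * ξ) = fh p D n ξ := by
  induction n with
  | zero => simp [muN, fh]
  | succ n ih =>
    unfold muN
    have := unifD_prob (hne (n + 1) (by omega)) ((Pprod p (n + 1) : ℝ)⁻¹)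
    have := muN_prob p D hne n
    rw [charFun_conv, ih, charFun_unifD, fh_succ, div_eq_mul_inv]

lemma fh_tendsto (p : ℕ → ℕ) (D : ℕ → Finset ℕ) (hne : ∀ n, 1 ≤ n → (D n).Nonempty)
    (μ : Measure ℝ) (hμ : IsMoran p D μ) (ξ : ℝ) :
    Tendsto (fun n => fh p D n ξ) atTop (nhds (charFun μ (2 * π * ξ))) := by
  obtain ⟨h1, h2⟩ := hμ
  let ν : ℕ → ProbabilityMeasure ℝ := fun n => ⟨muN p D n, muN_prob p D hne n⟩
  let ν' : ProbabilityMeasure ℝ := ⟨μ, h1⟩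
  have h3 : Tendsto ν atTop (nhds ν') := by
    rw [ProbabilityMeasure.tendsto_iff_forall_integral_tendsto]
    exact h2
  have h4 := ProbabilityMeasure.tendsto_iff_tendsto_charFun.1 h3 (2 * π * ξ)
  simpa [ν, ν', charFun_muN p D hne] using h4

/-- Summation identity. -/
def Idn (p : ℕ → ℕ) (D : ℕ → Finset ℕ) (n : ℕ) (S : Finset ℤ) : Prop :=
  ∀ ξ : ℝ, ∑ l ∈ S, ‖fh p D n (ξ + l)‖ ^ 2 = 1

lemma Idn_image (p : ℕ → ℕ) (D : ℕ → Finset ℕ) (hne : ∀ n, 1 ≤ n → (D n).Nonempty) (n : ℕ)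
    {ι : Type*} (T : Finset ι) (e : ι → ℤ)
    (h : ∀ ξ : ℝ, ∑ a ∈ T, ‖fh p D n (ξ + e a)‖ ^ 2 = 1) : Idn p D n (T.image e) := by
  classical
  intro ξ
  rw [Finset.sum_image, h]
  intro a ha b hb hab
  by_contra hne'
  have h1 := h (-(e a))
  have h2 : ∑ c ∈ ({a, b} : Finset ι), ‖fh p D n (-(e a) + e c)‖ ^ 2
      ≤ ∑ c ∈ T, ‖fh p D n (-(e a) + e c)‖ ^ 2 := by
    refine Finset.sum_le_sum_of_subset_of_nonneg ?_ (fun _ _ _ => by positivity)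
    intro c hc
    simp only [Finset.mem_insert, Finset.mem_singleton] at hc
    rcases hc with rfl | rfl
    · exact ha
    · exact hb
  rw [h1, Finset.sum_pair hne', ← hab] at h2
  simp [fh_zero p D hne] at h2
  norm_num at h2

/-- Hadamard-type condition. -/
def Had (E : Finset ℕ) (q : ℕ) (L : Finset ℤ) : Prop :=
  ∀ t : ℝ, ∑ l ∈ L, ‖mask E (t + (l : ℝ) / q)‖ ^ 2 = 1

lemma Idn_step (p : ℕ → ℕ) (hp : ∀ n, 1 ≤ n → 1 < p n) (D : ℕ → Finset ℕ)
    (hne : ∀ n, 1 ≤ n → (D n).Nonempty) (n : ℕ)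
    (S L : Finset ℤ) (hS : Idn p D n S) (hL : Had (D (n + 1)) (p (n + 1)) L) (k : ℤ × ℤ → ℤ) :
    Idn p D (n + 1) ((S ×ˢ L).image
      fun a => a.1 + Pprod p n * a.2 + Pprod p (n + 1) * k a) := by
  apply Idn_image p D hne
  intro ξ
  have h0 : (Pprod p n : ℝ) ≠ 0 := by exact_mod_cast (Pprod_pos p hp n).ne'
  have h1 : (p (n + 1) : ℝ) ≠ 0 := by
    have := hp (n + 1) (by omega)
    exact_mod_cast (by omega : p (n + 1) ≠ 0)
  have key : ∀ a : ℤ × ℤ, ‖fh p D (n + 1) (ξ + ((a.1 + Pprod p n * a.2 + Pprod p (n + 1) * k a : ℤ) : ℝ))‖ ^ 2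
      = ‖fh p D n (ξ + a.1)‖ ^ 2 *
        ‖mask (D (n + 1)) ((ξ + a.1) / Pprod p (n + 1) + (a.2 : ℝ) / p (n + 1))‖ ^ 2 := by
    intro a
    have e1 : ξ + ((a.1 + Pprod p n * a.2 + Pprod p (n + 1) * k a : ℤ) : ℝ)
        = (ξ + a.1 + Pprod p n * a.2) + Pprod p (n + 1) * k a := by push_cast; ring
    rw [e1, fh_add p hp, fh_succ, fh_add p hp, norm_mul, mul_pow]
    congr 4
    rw [Pprod_succ]; push_cast
    field_simp
  simp only [key]
  rw [Finset.sum_product]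
  simp only [← Finset.mul_sum, hL _, mul_one]
  exact hS ξ

lemma Idn_shift (p : ℕ → ℕ) (hp : ∀ n, 1 ≤ n → 1 < p n) (D : ℕ → Finset ℕ)
    (hne : ∀ n, 1 ≤ n → (D n).Nonempty) (n : ℕ)
    (S : Finset ℤ) (hS : Idn p D n S) (k : ℤ → ℤ) :
    Idn p D n (S.image fun a => a + Pprod p n * k a) := by
  apply Idn_image p D hne
  intro ξ
  rw [← hS ξ]
  refine Finset.sum_congr rfl fun a _ => ?_
  rw [← fh_add p hp D n (ξ + a) (k a)]
  congr 3
  push_cast; ring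

lemma Idn_nil (p : ℕ → ℕ) (D : ℕ → Finset ℕ) : Idn p D 0 {0} := by
  intro ξ; simp [fh]

lemma had_of_mod (E : Finset ℕ) (q : ℕ) (hE : E.Nonempty) (hq : 0 < q) (hd : E.card ∣ q)
    (hinj : ∀ a ∈ E, ∀ b ∈ E, a % E.card = b % E.card → a = b) : ∃ L, Had E q L := by
  obtain ⟨c, hc⟩ := hd
  set N := E.card with hN
  have hNpos : 0 < N := hE.card_pos
  have hcpos : 0 < c := Nat.pos_of_mul_pos_left (hc ▸ hq) |> fun h => by
    rcases Nat.eq_zero_or_pos c with h0 | h0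
    · subst h0; omega
    · exact h0
  have hNC : (N : ℂ) ≠ 0 := by exact_mod_cast hNpos.ne'
  refine ⟨(Finset.range N).image (fun j : ℕ => ((c * j : ℕ) : ℤ)), fun t => ?_⟩
  rw [Finset.sum_image]
  swap
  · intro a _ b _ hab
    have : c * a = c * b := by
      simp only at hab
      exact_mod_cast hab
    exact Nat.eq_of_mul_eq_mul_left hcpos this
  have hfrac : ∀ j : ℕ, (((c * j : ℕ) : ℤ) : ℝ) / q = (j : ℝ) / N := by
    intro j
    have : (c : ℝ) ≠ 0 := by exact_mod_cast hcpos.ne'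
    have : (N : ℝ) ≠ 0 := by exact_mod_cast hNpos.ne'
    rw [hc]; push_cast; field_simp
  simp only [hfrac]
  have hprim : IsPrimitiveRoot (Complex.exp (2 * π * Complex.I / N)) N :=
    Complex.isPrimitiveRoot_exp N hNpos.ne'
  set ζ := Complex.exp (2 * π * Complex.I / N) with hζ
  have hζ0 : ζ ≠ 0 := Complex.exp_ne_zero _
  set z : ℕ → ℂ := fun d => Complex.exp (2 * π * Complex.I * (d : ℝ) * t) with hz
  have hmask : ∀ j : ℕ, mask E (t + (j : ℝ) / N) = (N : ℂ)⁻¹ * ∑ d ∈ E, z d * ζ ^ (d * j) := by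
    intro j
    unfold mask
    congr 1
    refine Finset.sum_congr rfl fun d _ => ?_
    rw [hz, hζ, ← Complex.exp_nat_mul, ← Complex.exp_add]
    congr 1
    push_cast
    field_simp
  have hconjz : ∀ d, z d * (starRingEnd ℂ) (z d) = 1 := by
    intro d
    rw [hz, ← Complex.exp_conj, ← Complex.exp_add]
    simp [map_ofNat]
  have hconjζ : (starRingEnd ℂ) ζ = ζ⁻¹ := by
    rw [hζ, ← Complex.exp_conj, ← Complex.exp_neg]
    congr 1
    simp [map_ofNat]
    ring
  have hcomplex : ∑ j ∈ Finset.range N, (mask E (t + (j : ℝ) / N) *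
      (starRingEnd ℂ) (mask E (t + (j : ℝ) / N))) = 1 := by
    simp only [hmask, map_mul, map_sum, map_pow, map_inv₀, hconjζ, map_natCast]
    have e1 : ∀ j : ℕ, (N : ℂ)⁻¹ * (∑ d ∈ E, z d * ζ ^ (d * j)) *
        ((N : ℂ)⁻¹ * ∑ d ∈ E, (starRingEnd ℂ) (z d) * ζ⁻¹ ^ (d * j))
        = ∑ d ∈ E, ∑ d' ∈ E, (N : ℂ)⁻¹ * (N : ℂ)⁻¹ * (z d * (starRingEnd ℂ) (z d')) *
          (ζ ^ d * ζ⁻¹ ^ d') ^ j := by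
      intro j
      rw [mul_mul_mul_comm, Finset.sum_mul_sum, Finset.mul_sum]
      refine Finset.sum_congr rfl fun d _ => ?_
      rw [Finset.mul_sum]
      refine Finset.sum_congr rfl fun d' _ => ?_
      rw [mul_pow, ← pow_mul, ← pow_mul]; ring
    simp only [e1]
    rw [Finset.sum_comm]
    have e2 : ∀ d ∈ E, ∑ j ∈ Finset.range N, ∑ d' ∈ E, (N : ℂ)⁻¹ * (N : ℂ)⁻¹ *
        (z d * (starRingEnd ℂ) (z d')) * (ζ ^ d * ζ⁻¹ ^ d') ^ j = (N : ℂ)⁻¹ := by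
      intro d hd
      rw [Finset.sum_comm, Finset.sum_eq_single_of_mem d hd]
      · have : ζ ^ d * ζ⁻¹ ^ d = 1 := by rw [← mul_pow, mul_inv_cancel₀ hζ0, one_pow]
        simp only [this, one_pow, hconjz, mul_one, Finset.sum_const, Finset.card_range, nsmul_eq_mul]
        field_simp
      · intro d' hd' hdd
        rw [← Finset.mul_sum]
        have hw1 : ζ ^ d * ζ⁻¹ ^ d' ≠ 1 := by
          intro h
          have h' : ζ ^ d = ζ ^ d' := by
            rw [inv_pow] at h
            field_simp at h
            exact h
          apply hdd
          apply hinj _ hd' _ hd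
          rw [← pow_mod_orderOf ζ d, ← pow_mod_orderOf ζ d', ← hprim.eq_orderOf] at h'
          exact (hprim.pow_inj (Nat.mod_lt _ hNpos) (Nat.mod_lt _ hNpos) h').symm
        have hwN : (ζ ^ d * ζ⁻¹ ^ d') ^ N = 1 := by
          rw [mul_pow, ← pow_mul, ← pow_mul, mul_comm d, mul_comm d', pow_mul, pow_mul, inv_pow,
            hprim.pow_eq_one]; simp
        rw [geom_sum_eq hw1, hwN]; simp
    rw [Finset.sum_congr rfl e2]
    simp [← hN, hNC]
  have : ((∑ j ∈ Finset.range N, ‖mask E (t + (j : ℝ) / N)‖ ^ 2 : ℝ) : ℂ) = 1 := by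
    rw [← hcomplex]; push_cast
    refine Finset.sum_congr rfl fun j _ => ?_
    rw [Complex.mul_conj, Complex.normSq_eq_norm_sq]; push_cast; rfl
  exact_mod_cast this

lemma mask_pair {d : ℕ} (hd : 0 < d) (t : ℝ) :
    mask {0, d} t = (1 + Complex.exp (2 * π * Complex.I * (d : ℝ) * t)) / 2 := by
  unfold mask
  rw [Finset.sum_pair hd.ne, Finset.card_pair hd.ne]
  simp; ring

lemma had_pair (d q : ℕ) (hd : 0 < d) (hq : 0 < q) (h : 2 ∣ q / Nat.gcd d q) :
    ∃ r : ℤ, r ≠ 0 ∧ Had {0, d} q {0, r} := by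
  obtain ⟨c, hc⟩ := h
  set g := Nat.gcd d q with hg
  have hgpos : 0 < g := Nat.gcd_pos_of_pos_left _ hd
  have hgq : q = g * (2 * c) := by
    rw [← hc, Nat.mul_div_cancel' (Nat.gcd_dvd_right d q)]
  obtain ⟨d', hd'⟩ : g ∣ d := Nat.gcd_dvd_left d q
  have hcpos : 0 < c := by
    rcases Nat.eq_zero_or_pos c with h0 | h0
    · subst h0; simp at hgq; omega
    · exact h0
  have hodd : Odd d' := by
    rw [← Nat.not_even_iff_odd]
    rintro he
    obtain ⟨e, he⟩ := he
    have : 2 * g ∣ g := by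
      nth_rewrite 2 [hg]
      apply Nat.dvd_gcd
      · rw [hd', he]; exact ⟨e, by ring⟩
      · rw [hgq]; exact ⟨c, by ring⟩
    have := Nat.le_of_dvd hgpos this
    omega
  refine ⟨c, by exact_mod_cast hcpos.ne', fun t => ?_⟩
  have hc0 : (0 : ℤ) ≠ c := by exact_mod_cast hcpos.ne
  rw [Finset.sum_pair hc0, mask_pair hd, mask_pair hd]
  have e1 : Complex.exp (2 * π * Complex.I * (d : ℝ) * ((t + ((c : ℤ) : ℝ) / q : ℝ) : ℂ))
      = - Complex.exp (2 * π * Complex.I * (d : ℝ) * t) := by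
    obtain ⟨m, hm⟩ := hodd
    have hgC : (g : ℂ) ≠ 0 := by exact_mod_cast hgpos.ne'
    have hcC : (c : ℂ) ≠ 0 := by exact_mod_cast hcpos.ne'
    have : (2 * π * Complex.I * (d : ℝ) * ((t + ((c : ℤ) : ℝ) / q : ℝ) : ℂ) : ℂ)
      = 2 * π * Complex.I * (d : ℝ) * t + (((m : ℤ) : ℂ) * (2 * π * Complex.I) + π * Complex.I) := by
      rw [hgq, hd', hm]; push_cast; field_simp
    rw [this, Complex.exp_add, Complex.exp_add, Complex.exp_int_mul_two_pi_mul_I,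
      Complex.exp_pi_mul_I]; ring
  rw [e1]
  have e2 : ‖Complex.exp (2 * π * Complex.I * (d : ℝ) * t)‖ = 1 := by
    have : (2 * Real.pi * Complex.I * (d : ℝ) * t : ℂ)
        = ((2 * Real.pi * d * t : ℝ) : ℂ) * Complex.I := by
      push_cast; ring
    rw [this, Complex.norm_exp_ofReal_mul_I]
  simp only [Int.cast_zero, zero_div, add_zero]
  set w := Complex.exp (2 * π * Complex.I * (d : ℝ) * t)
  have h3 := parallelogram_law_with_norm ℝ (1 : ℂ) w
  rw [norm_div, norm_div, ← sub_eq_add_neg]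
  rw [e2] at h3
  simp at h3 ⊢
  nlinarith

lemma mask_pair_norm {d : ℕ} (hd : 0 < d) (t : ℝ) :
    ‖mask {0, d} t‖ = |cos (π * d * t)| := by
  rw [mask_pair hd]
  have : (1 + Complex.exp (2 * π * Complex.I * (d : ℝ) * t)) / 2
      = Complex.exp (((π * d * t : ℝ) : ℂ) * Complex.I) * ((cos (π * d * t) : ℝ) : ℂ) := by
    rw [Complex.ofReal_cos, Complex.cos, mul_div_assoc', mul_add, ← Complex.exp_add,
      ← Complex.exp_add]
    congr 1
    rw [add_comm]
    congr 1
    · congr 1; push_cast; ring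
    · rw [eq_comm, Complex.exp_eq_one_iff]; exact ⟨0, by push_cast; ring⟩
  rw [this, norm_mul, Complex.norm_exp_ofReal_mul_I, one_mul, Complex.norm_real, Real.norm_eq_abs]

/-- Modulus of the Fourier transform of the tail between levels `n` and `m`. -/
def Gt (p : ℕ → ℕ) (D : ℕ → Finset ℕ) (n m : ℕ) (ξ : ℝ) : ℝ :=
  ∏ j ∈ Finset.Ioc n m, ‖mask (D j) (ξ / Pprod p j)‖

lemma Gt_nonneg (p : ℕ → ℕ) (D : ℕ → Finset ℕ) (n m : ℕ) (ξ : ℝ) : 0 ≤ Gt p D n m ξ :=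
  Finset.prod_nonneg fun _ _ => norm_nonneg _

lemma Gt_le_one (p : ℕ → ℕ) (D : ℕ → Finset ℕ) (n m : ℕ) (ξ : ℝ) : Gt p D n m ξ ≤ 1 :=
  Finset.prod_le_one (fun _ _ => norm_nonneg _) fun _ _ => mask_norm_le _ _

lemma Gt_self (p : ℕ → ℕ) (D : ℕ → Finset ℕ) (n : ℕ) (ξ : ℝ) : Gt p D n n ξ = 1 := by
  simp [Gt]

lemma Gt_succ (p : ℕ → ℕ) (D : ℕ → Finset ℕ) {n m : ℕ} (h : n ≤ m) (ξ : ℝ) :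
    Gt p D n (m + 1) ξ = Gt p D n m ξ * ‖mask (D (m + 1)) (ξ / Pprod p (m + 1))‖ := by
  unfold Gt
  rw [Finset.prod_Ioc_succ_top (by omega)]

lemma Gt_left (p : ℕ → ℕ) (D : ℕ → Finset ℕ) {n m : ℕ} (h : n + 1 ≤ m) (ξ : ℝ) :
    Gt p D n m ξ = ‖mask (D (n + 1)) (ξ / Pprod p (n + 1))‖ * Gt p D (n + 1) m ξ := by
  induction m, h using Nat.le_induction with
  | base => rw [Gt_succ p D le_rfl, Gt_self, Gt_self]; ring
  | succ m hm ih => rw [Gt_succ p D (by omega), ih, Gt_succ p D hm]; ring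

lemma Gt_fh (p : ℕ → ℕ) (D : ℕ → Finset ℕ) {n m : ℕ} (h : n ≤ m) (ξ : ℝ) :
    ‖fh p D m ξ‖ = ‖fh p D n ξ‖ * Gt p D n m ξ := by
  induction m, h using Nat.le_induction with
  | base => rw [Gt_self, mul_one]
  | succ m hm ih => rw [fh_succ, norm_mul, ih, Gt_succ p D hm]; ring

lemma fh_zero_of_le (p : ℕ → ℕ) (D : ℕ → Finset ℕ) {n m : ℕ} (h : n ≤ m) (ξ : ℝ)
    (h0 : fh p D n ξ = 0) : fh p D m ξ = 0 := by
  rw [← norm_eq_zero, Gt_fh p D h, h0]; simp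

lemma cos_sum_le {ι : Type*} (s : Finset ι) (a : ι → ℝ) (ha : ∀ i ∈ s, 0 ≤ a i)
    (hs : ∑ i ∈ s, a i ≤ π / 2) : cos (∑ i ∈ s, a i) ≤ ∏ i ∈ s, |cos (a i)| := by
  classical
  induction s using Finset.induction_on with
  | empty => simp
  | insert i s hi ih =>
    rw [Finset.sum_insert hi] at hs ⊢
    rw [Finset.prod_insert hi]
    have h1 := ha i (Finset.mem_insert_self _ _)
    have h2 : 0 ≤ ∑ i ∈ s, a i :=
      Finset.sum_nonneg fun j hj => ha j (Finset.mem_insert_of_mem hj)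
    have h3 := ih (fun j hj => ha j (Finset.mem_insert_of_mem hj)) (by linarith)
    have hpi := Real.pi_pos
    have h4 : 0 ≤ cos (a i) := cos_nonneg_of_mem_Icc ⟨by linarith, by linarith⟩
    have h5 : 0 ≤ sin (a i) := sin_nonneg_of_nonneg_of_le_pi h1 (by linarith)
    have h6 : 0 ≤ sin (∑ i ∈ s, a i) := sin_nonneg_of_nonneg_of_le_pi h2 (by linarith)
    rw [cos_add, abs_of_nonneg h4]
    nlinarith [mul_nonneg h5 h6, mul_le_mul_of_nonneg_left h3 h4]

/-- Only two-element digit sets beyond `n0`. -/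
def TailCond (p : ℕ → ℕ) (D : ℕ → Finset ℕ) (n0 : ℕ) (d : ℕ → ℕ) : Prop :=
  ∀ j, n0 < j → 0 < d j ∧ d j < p j ∧ D j = {0, d j}

lemma d_div_le (p : ℕ → ℕ) (hp : ∀ n, 1 ≤ n → 1 < p n) (j d : ℕ) (hd : d < p (j + 1)) :
    (d : ℝ) / Pprod p (j + 1) ≤ 1 / Pprod p j - 1 / Pprod p (j + 1) := by
  have h0 : (0 : ℝ) < Pprod p j := by exact_mod_cast Pprod_pos p hp j
  have h1 : (0 : ℝ) < p (j + 1) := by exact_mod_cast (by omega : 0 < p (j + 1))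
  have h2 : (d : ℝ) + 1 ≤ p (j + 1) := by exact_mod_cast hd
  rw [Pprod_succ]; push_cast
  have : 1 / (Pprod p j : ℝ) - 1 / (Pprod p j * p (j + 1)) = (p (j + 1) - 1) / (Pprod p j * p (j + 1)) := by
    field_simp
  rw [this]
  gcongr
  linarith

lemma sum_d_le (p : ℕ → ℕ) (hp : ∀ n, 1 ≤ n → 1 < p n) (D : ℕ → Finset ℕ) (n0 : ℕ) (d : ℕ → ℕ)
    (h : TailCond p D n0 d) {n m : ℕ} (hn : n0 ≤ n) (hm : n ≤ m) :
    ∑ j ∈ Finset.Ioc n m, (d j : ℝ) / Pprod p j ≤ 1 / Pprod p n - 1 / Pprod p m := by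
  induction m, hm using Nat.le_induction with
  | base => simp
  | succ m hm ih =>
    rw [Finset.sum_Ioc_succ_top (by omega)]
    have := d_div_le p hp m (d (m + 1)) (h (m + 1) (by omega)).2.1
    linarith

lemma Gt_tail (p : ℕ → ℕ) (hp : ∀ n, 1 ≤ n → 1 < p n) (D : ℕ → Finset ℕ) (n0 : ℕ) (d : ℕ → ℕ)
    (h : TailCond p D n0 d) {n m : ℕ} (hn : n0 ≤ n) (hm : n ≤ m) (ξ : ℝ)
    (hξ : |ξ| ≤ Pprod p n / 3) : 1 / 2 ≤ Gt p D n m ξ := by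
  have e : Gt p D n m ξ = ∏ j ∈ Finset.Ioc n m, |cos (π * |ξ| * (d j / Pprod p j))| := by
    unfold Gt
    refine Finset.prod_congr rfl fun j hj => ?_
    obtain ⟨h1, h2, h3⟩ := h j (by have := (Finset.mem_Ioc.1 hj).1; omega)
    rw [h3, mask_pair_norm h1, ← Real.cos_abs]
    congr 2
    rw [abs_mul, abs_mul, abs_div, abs_of_pos Real.pi_pos, Nat.abs_cast, Nat.abs_cast]; ring
  have hs := sum_d_le p hp D n0 d h hn hm
  have hP : (0 : ℝ) < Pprod p n := by exact_mod_cast Pprod_pos p hp n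
  have hPm : (0 : ℝ) < Pprod p m := by exact_mod_cast Pprod_pos p hp m
  have hpi := Real.pi_pos
  have hs' : ∑ j ∈ Finset.Ioc n m, π * |ξ| * (d j / Pprod p j : ℝ) ≤ π / 3 := by
    rw [← Finset.mul_sum]
    calc π * |ξ| * ∑ j ∈ Finset.Ioc n m, (d j / Pprod p j : ℝ)
        ≤ π * (Pprod p n / 3) * (1 / Pprod p n) := by
          have : 0 < 1 / (Pprod p m : ℝ) := by positivity
          gcongr
          linarith
      _ = π / 3 := by field_simp
  rw [e]
  refine le_trans ?_ (cos_sum_le _ _ (fun j _ => by positivity) (by linarith))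
  rw [← Real.cos_pi_div_three]
  apply Real.cos_le_cos_of_nonneg_of_le_pi
  · exact Finset.sum_nonneg fun j _ => by positivity
  · linarith
  · exact hs'

lemma cos_low {φ : ℝ} (h : |φ| ≤ 9 / 20) : 1 / 10 ≤ |cos (π * φ)| := by
  have hpi := Real.pi_pos
  have h0 := abs_nonneg φ
  have e : |cos (π * φ)| = |sin (π * (1 / 2 - |φ|))| := by
    rw [← Real.cos_abs, abs_mul, abs_of_pos hpi, ← Real.sin_pi_div_two_sub]
    congr 2; ring
  rw [e]
  have := Real.mul_le_sin (x := π * (1 / 2 - |φ|)) (by apply mul_nonneg <;> linarith)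
    (by nlinarith)
  refine le_trans ?_ (le_abs_self _)
  refine le_trans ?_ this
  have : 2 / π * (π * (1 / 2 - |φ|)) = 2 * (1 / 2 - |φ|) := by field_simp
  rw [this]; linarith

lemma scalar_aux (q d : ℕ) (hd : 0 < d) (hdq : d < q) (t0 : ℝ) (h1 : t0 ≤ 1 / 2)
    (h2 : 9 / 20 < t0 * d / q) :
    ∃ k : ℤ, |t0 + k| ≤ q / 3 ∧ 1 / 10 ≤ |cos (π * (d * (t0 + k) / q))| := by
  have hq : (0 : ℝ) < q := by exact_mod_cast (by omega : 0 < q)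
  have hdR : (0 : ℝ) < d := by exact_mod_cast hd
  rw [lt_div_iff₀ hq] at h2
  have ht0 : 0 < t0 := by by_contra hh; push Not at hh; nlinarith
  set r : ℝ := q - d with hr
  have hr1 : 1 ≤ r := by
    have : (d : ℝ) + 1 ≤ q := by exact_mod_cast hdq
    linarith
  have hr2 : 10 * r < q := by nlinarith
  set k := ⌊(q : ℝ) / (4 * r)⌋ with hk
  have hk1 : (k : ℝ) ≤ q / (4 * r) := Int.floor_le _
  have hk2 : (q : ℝ) / (4 * r) < k + 1 := Int.lt_floor_add_one _
  rw [le_div_iff₀ (by positivity)] at hk1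
  rw [div_lt_iff₀ (by positivity)] at hk2
  have hk0 : (0 : ℝ) ≤ k := by
    have : 0 ≤ k := Int.floor_nonneg.2 (by positivity)
    exact_mod_cast this
  refine ⟨k, ?_, ?_⟩
  · rw [abs_of_nonneg (by linarith)]
    nlinarith
  · have e : π * (d * (t0 + k) / q) = π * ((t0 * d - k * r) / q) + k * π := by
      rw [hr]; field_simp; ring
    rw [e, Real.cos_add_int_mul_pi, abs_mul, abs_zpow, abs_neg, abs_one, one_zpow, one_mul]
    apply cos_low
    rw [abs_div, abs_of_pos hq, div_le_iff₀ hq, abs_le]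
    have : t0 * d ≤ q / 2 := by nlinarith
    constructor <;> nlinarith

lemma scalar (q d : ℕ) (hd : 0 < d) (hdq : d < q) (x : ℝ) :
    ∃ k : ℤ, |x + k| ≤ q / 3 ∧ 1 / 10 ≤ |cos (π * (d * (x + k) / q))| := by
  have hq : (0 : ℝ) < q := by exact_mod_cast (by omega : 0 < q)
  have hq2 : (2 : ℝ) ≤ q := by exact_mod_cast (by omega : 2 ≤ q)
  set t0 := x - round x with ht0
  have ht : |t0| ≤ 1 / 2 := abs_sub_round x
  have ht' := abs_le.1 ht
  by_cases hc : |t0| * d / q ≤ 9 / 20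
  · refine ⟨-round x, ?_, ?_⟩
    · have : x + ((-round x : ℤ) : ℝ) = t0 := by push_cast; ring
      rw [this]; linarith
    · have : x + ((-round x : ℤ) : ℝ) = t0 := by push_cast; ring
      rw [this]
      apply cos_low
      rw [abs_div, abs_mul, Nat.abs_cast, Nat.abs_cast, mul_comm]; exact hc
  · push Not at hc
    rcases le_total 0 t0 with hs | hs
    · rw [abs_of_nonneg hs] at hc
      obtain ⟨k, hk1, hk2⟩ := scalar_aux q d hd hdq t0 ht'.2 hc
      have : x + ((k - round x : ℤ) : ℝ) = t0 + k := by push_cast; ring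
      exact ⟨k - round x, by rw [this]; exact hk1, by rw [this]; exact hk2⟩
    · rw [abs_of_nonpos hs] at hc
      obtain ⟨k, hk1, hk2⟩ := scalar_aux q d hd hdq (-t0) (by linarith) hc
      have : x + ((-k - round x : ℤ) : ℝ) = -(-t0 + k) := by push_cast; ring
      refine ⟨-k - round x, by rw [this, abs_neg]; exact hk1, ?_⟩
      rw [this, mul_neg, neg_div, mul_neg, Real.cos_neg]
      exact hk2

lemma Gt_low (p : ℕ → ℕ) (hp : ∀ n, 1 ≤ n → 1 < p n) (D : ℕ → Finset ℕ) (n0 : ℕ) (d : ℕ → ℕ)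
    (h : TailCond p D n0 d) {n : ℕ} (hn : n0 ≤ n) (ξ : ℝ) :
    ∃ k : ℤ, ∀ m, n ≤ m → 1 / 20 ≤ Gt p D n m (ξ + Pprod p n * k) := by
  obtain ⟨h1, h2, h3⟩ := h (n + 1) (by omega)
  have hP : (0 : ℝ) < Pprod p n := by exact_mod_cast Pprod_pos p hp n
  have hq : (0 : ℝ) < p (n + 1) := by exact_mod_cast (by omega : 0 < p (n + 1))
  obtain ⟨k, hk1, hk2⟩ := scalar (p (n + 1)) (d (n + 1)) h1 h2 (ξ / Pprod p n)
  refine ⟨k, fun m hm => ?_⟩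
  rcases hm.eq_or_lt with rfl | hlt
  · rw [Gt_self]; norm_num
  · rw [Gt_left p D hlt, h3, mask_pair_norm h1]
    have e : π * d (n + 1) * ((ξ + Pprod p n * k) / Pprod p (n + 1))
        = π * (d (n + 1) * (ξ / Pprod p n + k) / p (n + 1)) := by
      rw [Pprod_succ]; push_cast; field_simp
    have h5 : 1 / 2 ≤ Gt p D (n + 1) m (ξ + Pprod p n * k) := by
      apply Gt_tail p hp D n0 d h (by omega) hlt
      have : ξ + Pprod p n * k = Pprod p n * (ξ / Pprod p n + k) := by field_simp
      rw [this, abs_mul, abs_of_pos hP, Pprod_succ]; push_cast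
      rw [mul_div_assoc]
      gcongr
    rw [e]
    nlinarith

lemma Gt_perturb (p : ℕ → ℕ) (hp : ∀ n, 1 ≤ n → 1 < p n) (D : ℕ → Finset ℕ) (n0 : ℕ) (d : ℕ → ℕ)
    (h : TailCond p D n0 d) {n m : ℕ} (hn : n0 ≤ n) (hm : n ≤ m) (ξ η : ℝ) :
    |Gt p D n m (ξ + η) - Gt p D n m ξ| ≤ π * |η| * (1 / Pprod p n - 1 / Pprod p m) := by
  induction m, hm using Nat.le_induction with
  | base => simp [Gt_self]
  | succ m hm ih =>
    rw [Gt_succ p D hm, Gt_succ p D hm]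
    obtain ⟨h1, h2, h3⟩ := h (m + 1) (by omega)
    have hP : (0 : ℝ) < Pprod p (m + 1) := by exact_mod_cast Pprod_pos p hp (m + 1)
    have hd := d_div_le p hp m (d (m + 1)) h2
    have hpi := Real.pi_pos
    have key : |‖mask (D (m + 1)) ((ξ + η) / Pprod p (m + 1))‖ - ‖mask (D (m + 1)) (ξ / Pprod p (m + 1))‖|
        ≤ π * |η| * (1 / Pprod p m - 1 / Pprod p (m + 1)) := by
      rw [h3, mask_pair_norm h1, mask_pair_norm h1]
      refine (abs_abs_sub_abs_le _ _).trans ?_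
      refine (Real.abs_cos_sub_cos_le _ _).trans ?_
      have : π * d (m + 1) * ((ξ + η) / Pprod p (m + 1)) - π * d (m + 1) * (ξ / Pprod p (m + 1))
          = π * η * (d (m + 1) / Pprod p (m + 1)) := by ring
      rw [this, abs_mul, abs_mul, abs_of_pos hpi, abs_of_nonneg (a := (d (m + 1) / Pprod p (m + 1) : ℝ)) (by positivity)]
      gcongr
    set a := Gt p D n m (ξ + η)
    set b := Gt p D n m ξ
    set u := ‖mask (D (m + 1)) ((ξ + η) / Pprod p (m + 1))‖
    set v := ‖mask (D (m + 1)) (ξ / Pprod p (m + 1))‖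
    have ha : |a| ≤ 1 := by
      rw [abs_of_nonneg (Gt_nonneg ..)]; exact Gt_le_one ..
    have hv : |v| ≤ 1 := by
      rw [abs_of_nonneg (norm_nonneg _)]; exact mask_norm_le ..
    have e : a * u - b * v = a * (u - v) + (a - b) * v := by ring
    rw [e]
    refine (abs_add_le _ _).trans ?_
    rw [abs_mul, abs_mul]
    have i1 : |a| * |u - v| ≤ |u - v| := mul_le_of_le_one_left (abs_nonneg _) ha
    have i2 : |a - b| * |v| ≤ |a - b| := mul_le_of_le_one_right (abs_nonneg _) hv
    linarith [ih]

lemma exists_chain (p : ℕ → ℕ) (hp : ∀ n, 1 ≤ n → 1 < p n) (D : ℕ → Finset ℕ)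
    (hne : ∀ n, 1 ≤ n → (D n).Nonempty) (n0 : ℕ) (d : ℕ → ℕ) (h : TailCond p D n0 d)
    (hH : ∀ n, 1 ≤ n → ∃ L, Had (D n) (p n) L)
    (hH2 : ∀ n, n0 < n → ∃ r : ℤ, r ≠ 0 ∧ Had (D n) (p n) {0, r}) :
    ∃ S : ℕ → Finset ℤ, (∀ i, S i ⊆ S (i + 1)) ∧ ∀ i, Idn p D (n0 + i) (S i) ∧
      ∀ l ∈ S i, ∀ m, n0 + i ≤ m → 1 / 20 ≤ Gt p D (n0 + i) m l := by
  classical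
  have base0 : ∀ n, ∃ S, Idn p D n S := by
    intro n
    induction n with
    | zero => exact ⟨_, Idn_nil p D⟩
    | succ n ih =>
      obtain ⟨S, hS⟩ := ih
      obtain ⟨L, hL⟩ := hH (n + 1) (by omega)
      exact ⟨_, Idn_step p hp D hne n S L hS hL (fun _ => 0)⟩
  have base : ∃ S, Idn p D (n0 + 0) S ∧ ∀ l ∈ S, ∀ m, n0 + 0 ≤ m → 1 / 20 ≤ Gt p D (n0 + 0) m l := by
    obtain ⟨S, hS⟩ := base0 n0
    choose k hk using fun l : ℤ => Gt_low p hp D n0 d h (le_refl n0) (l : ℝ)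
    refine ⟨_, Idn_shift p hp D hne n0 S hS k, ?_⟩
    intro l hl m hm
    obtain ⟨a, ha, rfl⟩ := Finset.mem_image.1 hl
    have := hk a m hm
    push_cast
    exact this
  have step : ∀ i S, (Idn p D (n0 + i) S ∧ ∀ l ∈ S, ∀ m, n0 + i ≤ m → 1 / 20 ≤ Gt p D (n0 + i) m l) →
      ∃ S', S ⊆ S' ∧ (Idn p D (n0 + (i + 1)) S' ∧
        ∀ l ∈ S', ∀ m, n0 + (i + 1) ≤ m → 1 / 20 ≤ Gt p D (n0 + (i + 1)) m l) := by
    rintro i S ⟨hS, hb⟩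
    obtain ⟨r, hr, hL⟩ := hH2 (n0 + i + 1) (by omega)
    choose k hk using fun l : ℤ => Gt_low p hp D n0 d h (n := n0 + i + 1) (by omega) (l : ℝ)
    have hI := Idn_step p hp D hne (n0 + i) S {0, r} hS hL
      (fun a => if a.2 = 0 then 0 else k (a.1 + Pprod p (n0 + i) * a.2))
    refine ⟨_, ?_, hI, ?_⟩
    · intro l hl
      refine Finset.mem_image.2 ⟨(l, 0), ?_, ?_⟩
      · simp [hl]
      · simp
    · intro l hl m hm
      obtain ⟨⟨a, b⟩, hab, rfl⟩ := Finset.mem_image.1 hl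
      simp only [Finset.mem_product, Finset.mem_insert, Finset.mem_singleton] at hab
      obtain ⟨ha, hb'⟩ := hab
      by_cases hb0 : b = 0
      · subst hb0
        simp only [mul_zero, add_zero, if_true]
        refine (hb a ha m (by omega)).trans ?_
        rw [Gt_left p D (by omega)]
        exact mul_le_of_le_one_left (Gt_nonneg ..) (mask_norm_le ..)
      · simp only [hb0, if_false]
        have := hk (a + Pprod p (n0 + i) * b) m hm
        push_cast at this ⊢
        exact this
  choose! nxt hn1 hn2 using step
  obtain ⟨S0, hS0⟩ := base
  let S : ℕ → Finset ℤ := fun i => Nat.rec S0 (fun i T => nxt i T) i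
  have hS : ∀ i, Idn p D (n0 + i) (S i) ∧
      ∀ l ∈ S i, ∀ m, n0 + i ≤ m → 1 / 20 ≤ Gt p D (n0 + i) m l := by
    intro i
    induction i with
    | zero => exact hS0
    | succ i ih => exact hn2 i (S i) ih
  exact ⟨S, fun i => hn1 i (S i) (hS i), hS⟩

lemma chain_parseval (p : ℕ → ℕ) (hp : ∀ n, 1 ≤ n → 1 < p n) (D : ℕ → Finset ℕ)
    (hne : ∀ n, 1 ≤ n → (D n).Nonempty) (n0 : ℕ) (d : ℕ → ℕ) (h : TailCond p D n0 d)
    (μ : Measure ℝ) (hμ : IsMoran p D μ)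
    (S : ℕ → Finset ℤ) (hmono : ∀ i, S i ⊆ S (i + 1)) (hId : ∀ i, Idn p D (n0 + i) (S i))
    (hb : ∀ i, ∀ l ∈ S i, ∀ m, n0 + i ≤ m → 1 / 20 ≤ Gt p D (n0 + i) m l) (ξ : ℝ) :
    HasSum (fun l : {l : ℤ // ∃ i, l ∈ S i} => ‖charFun μ (2 * π * (ξ + (l : ℤ)))‖ ^ 2) 1 := by
  classical
  have hM : Monotone S := monotone_nat_of_le_succ hmono
  set g : {l : ℤ // ∃ i, l ∈ S i} → ℝ := fun l => ‖charFun μ (2 * π * (ξ + (l : ℤ)))‖ ^ 2 with hg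
  set f : ℕ → {l : ℤ // ∃ i, l ∈ S i} → ℝ :=
    fun i l => if (l : ℤ) ∈ S i then ‖fh p D (n0 + i) (ξ + (l : ℤ))‖ ^ 2 else 0 with hf
  have hfg : ∀ l, Tendsto (fun i => f i l) atTop (nhds (g l)) := by
    intro l
    obtain ⟨i0, hi0⟩ := l.2
    have h1 : Tendsto (fun i => ‖fh p D (n0 + i) (ξ + (l : ℤ))‖ ^ 2) atTop (nhds (g l)) := by
      have := fh_tendsto p D hne μ hμ (ξ + (l : ℤ))
      have h2 : Tendsto (fun i : ℕ => n0 + i) atTop atTop := tendsto_atTop_mono (fun i => Nat.le_add_left i n0) tendsto_id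
      exact ((this.comp h2).norm).pow 2
    refine h1.congr' ?_
    filter_upwards [eventually_ge_atTop i0] with i hi
    simp only [hf]
    rw [if_pos (hM hi hi0)]
  have hf0 : ∀ i l, 0 ≤ f i l := by
    intro i l; simp only [hf]; split_ifs <;> positivity
  have hfsum : ∀ i, HasSum (f i) 1 := by
    intro i
    have e : ∑ l ∈ (S i).subtype (fun l => ∃ i, l ∈ S i), f i l = 1 := by
      rw [← hId i ξ]
      rw [Finset.sum_subtype_eq_sum_filter (s := S i) (p := fun l => ∃ i, l ∈ S i)
        (f := fun l : ℤ => if l ∈ S i then ‖fh p D (n0 + i) (ξ + l)‖ ^ 2 else 0)]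
      rw [Finset.filter_true_of_mem (fun l hl => ⟨i, hl⟩)]
      exact Finset.sum_congr rfl fun l hl => if_pos hl
    rw [← e]
    apply hasSum_sum_of_ne_finset_zero
    intro l hl
    simp only [Finset.mem_subtype] at hl
    simp [hf, hl]
  have hgs : Summable g := by
    refine summable_of_sum_le (c := 1) (fun l => by simp only [hg]; positivity) fun T => ?_
    refine le_of_tendsto' (tendsto_finsetSum T fun l _ => hfg l) fun i => ?_
    exact sum_le_hasSum T (fun l _ => hf0 i l) (hfsum i)
  have hPinf : Tendsto (fun i => π * |ξ| * (1 / (Pprod p (n0 + i) : ℝ))) atTop (nhds 0) := by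
    rw [← mul_zero (π * |ξ|)]
    refine Tendsto.const_mul _ ?_
    refine squeeze_zero (fun i => by positivity) (g := fun i => (1 / 2 : ℝ) ^ i) ?_
      (tendsto_pow_atTop_nhds_zero_of_lt_one (by norm_num) (by norm_num))
    intro i
    rw [one_div_pow]
    apply one_div_le_one_div_of_le (by positivity)
    have h1 := Pprod_ge p hp (n0 + i)
    have h2 : 2 ^ i ≤ 2 ^ (n0 + i) := Nat.pow_le_pow_right (by norm_num) (by omega)
    exact_mod_cast h2.trans h1
  have hbound : ∀ᶠ i in atTop, ∀ l, ‖f i l‖ ≤ 1600 * g l := by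
    filter_upwards [hPinf.eventually_lt_const (show (0 : ℝ) < 1 / 40 by norm_num)] with i hi l
    rw [Real.norm_of_nonneg (hf0 i l)]
    simp only [hf]
    split_ifs with hl
    · have key : ‖fh p D (n0 + i) (ξ + (l : ℤ))‖ * (1 / 40) ≤ ‖charFun μ (2 * π * (ξ + (l : ℤ)))‖ := by
        refine ge_of_tendsto (fh_tendsto p D hne μ hμ (ξ + (l : ℤ))).norm ?_
        filter_upwards [eventually_ge_atTop (n0 + i)] with m hm
        rw [Gt_fh p D hm]
        gcongr
        have h1 := hb i l hl m hm
        have h2 := Gt_perturb p hp D n0 d h (Nat.le_add_right n0 i) hm (l : ℤ) ξ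
        have h3 := (abs_le.1 h2).1
        rw [add_comm ξ]
        have h4 : π * |ξ| * (1 / (Pprod p (n0 + i) : ℝ) - 1 / Pprod p m) ≤ π * |ξ| * (1 / (Pprod p (n0 + i) : ℝ)) := by
          have : (0 : ℝ) ≤ 1 / Pprod p m := by positivity
          have hpi := Real.pi_pos
          gcongr
          linarith
        linarith
      have h0 := norm_nonneg (fh p D (n0 + i) (ξ + (l : ℤ)))
      simp only [hg]
      nlinarith
    · simp only [hg]; positivity
  have hlim := tendsto_tsum_of_dominated_convergence (hgs.mul_left 1600) hfg hbound
  simp only [fun i => (hfsum i).tsum_eq] at hlim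
  have := tendsto_nhds_unique hlim tendsto_const_nhds
  rw [← this]
  exact hgs.hasSum

lemma hilb {E ι : Type*} [NormedAddCommGroup E] [InnerProductSpace ℂ E] (v : ι → E)
    (hv : Orthonormal ℂ v) (x f : E)
    (hx : HasSum (fun i => ‖inner ℂ (v i) x‖ ^ 2) (‖x‖ ^ 2)) (hf : ∀ i, inner ℂ (v i) f = 0) :
    inner ℂ f x = 0 := by
  have hf' : ∀ i, inner ℂ f (v i) = 0 := fun i => by
    rw [← inner_conj_symm, hf]; simp
  have key : ∀ s : Finset ι, ‖inner ℂ f x‖ ^ 2 ≤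
      ‖f‖ ^ 2 * (‖x‖ ^ 2 - ∑ i ∈ s, ‖inner ℂ (v i) x‖ ^ 2) := by
    intro s
    set y := ∑ i ∈ s, inner ℂ (v i) x • v i with hy
    have h1 : inner ℂ f x = inner ℂ f (x - y) := by
      rw [inner_sub_right, hy, inner_sum]
      simp [inner_smul_right, hf']
    have h2 : inner ℂ x y = ((∑ i ∈ s, ‖inner ℂ (v i) x‖ ^ 2 : ℝ) : ℂ) := by
      rw [hy, inner_sum]
      push_cast
      refine Finset.sum_congr rfl fun i _ => ?_
      rw [inner_smul_right, ← inner_conj_symm x (v i), Complex.mul_conj, Complex.normSq_eq_norm_sq]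
      push_cast; rfl
    have h3 : inner ℂ y y = ((∑ i ∈ s, ‖inner ℂ (v i) x‖ ^ 2 : ℝ) : ℂ) := by
      rw [hy, hv.inner_sum]
      push_cast
      refine Finset.sum_congr rfl fun i _ => ?_
      rw [mul_comm, Complex.mul_conj, Complex.normSq_eq_norm_sq]
      push_cast; rfl
    have h4 : ‖x - y‖ ^ 2 = ‖x‖ ^ 2 - ∑ i ∈ s, ‖inner ℂ (v i) x‖ ^ 2 := by
      have h5 : ‖y‖ ^ 2 = ∑ i ∈ s, ‖inner ℂ (v i) x‖ ^ 2 := by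
        rw [← inner_self_eq_norm_sq (𝕜 := ℂ) y, h3]
        simp only [Complex.ofReal_re, RCLike.re_to_complex]
      rw [norm_sub_sq (𝕜 := ℂ), h2, h5]
      simp only [Complex.ofReal_re, RCLike.re_to_complex]
      ring
    rw [h1, ← h4, ← mul_pow]
    gcongr
    exact norm_inner_le_norm _ _
  have hlim : Tendsto (fun s : Finset ι => ‖f‖ ^ 2 * (‖x‖ ^ 2 - ∑ i ∈ s, ‖inner ℂ (v i) x‖ ^ 2))
      atTop (nhds (‖f‖ ^ 2 * (‖x‖ ^ 2 - ‖x‖ ^ 2))) :=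
    (tendsto_const_nhds.sub hx).const_mul _
  have := ge_of_tendsto' hlim key
  rw [sub_self, mul_zero] at this
  have h0 : ‖inner ℂ f x‖ = 0 := by
    have := norm_nonneg (inner ℂ f x)
    nlinarith
  exact norm_eq_zero.1 h0

lemma real_unique (μ : Measure ℝ) [IsProbabilityMeasure μ] (u : ℝ → ℝ) (hu : Integrable u μ)
    (h : ∀ t : ℝ, ∫ x, (u x : ℂ) * Complex.exp (t * x * Complex.I) ∂μ = 0) : u =ᵐ[μ] 0 := by
  have m1 : AEMeasurable (fun x => ENNReal.ofReal (u x)) μ := hu.aemeasurable.ennreal_ofReal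
  have m2 : AEMeasurable (fun x => ENNReal.ofReal (-u x)) μ := hu.neg.aemeasurable.ennreal_ofReal
  have f1 : IsFiniteMeasure (μ.withDensity fun x => ENNReal.ofReal (u x)) :=
    isFiniteMeasure_withDensity_ofReal hu.2
  have f2 : IsFiniteMeasure (μ.withDensity fun x => ENNReal.ofReal (-u x)) :=
    isFiniteMeasure_withDensity_ofReal hu.neg.2
  have bexp : ∀ t : ℝ, ∀ w : ℝ → ℝ, Integrable w μ →
      Integrable (fun x => (w x : ℂ) * Complex.exp (t * x * Complex.I)) μ := by
    intro t w hw
    refine hw.ofReal.mul_bdd (c := 1) (by fun_prop) (Eventually.of_forall fun x => ?_)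
    rw [← Complex.ofReal_mul, Complex.norm_exp_ofReal_mul_I]
  have heq : (μ.withDensity fun x => ENNReal.ofReal (u x))
      = μ.withDensity fun x => ENNReal.ofReal (-u x) := by
    apply Measure.ext_of_charFun
    ext t
    rw [charFun_apply_real, charFun_apply_real,
      integral_withDensity_eq_integral_toReal_smul₀ m1 (by simp),
      integral_withDensity_eq_integral_toReal_smul₀ m2 (by simp)]
    simp only [ENNReal.toReal_ofReal', Complex.real_smul]
    rw [← sub_eq_zero, ← integral_sub]
    · rw [← h t]
      congr 1
      ext x
      rw [← sub_mul, ← Complex.ofReal_sub]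
      congr 2
      rcases le_total 0 (u x) with h0 | h0
      · rw [max_eq_left h0, max_eq_right (by linarith)]; ring
      · rw [max_eq_right h0, max_eq_left (by linarith)]; ring
    · exact bexp t _ hu.pos_part
    · exact bexp t _ hu.neg_part
  have hfin : ∫⁻ x, ENNReal.ofReal (u x) ∂μ ≠ ⊤ := by
    have := f1.measure_univ_lt_top
    rw [withDensity_apply _ MeasurableSet.univ, Measure.restrict_univ] at this
    exact this.ne
  have hae := (withDensity_eq_iff m1 m2 hfin).1 heq
  filter_upwards [hae] with x hx
  simp only [Pi.zero_apply]
  by_contra hne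
  rcases lt_or_gt_of_ne hne with h0 | h0
  · rw [ENNReal.ofReal_of_nonpos h0.le, eq_comm, ENNReal.ofReal_eq_zero] at hx
    linarith
  · rw [ENNReal.ofReal_of_nonpos (p := -u x) (by linarith), ENNReal.ofReal_eq_zero] at hx
    linarith

lemma complex_unique (μ : Measure ℝ) [IsProbabilityMeasure μ] (f : ℝ → ℂ) (hf : Integrable f μ)
    (h : ∀ t : ℝ, ∫ x, f x * Complex.exp (t * x * Complex.I) ∂μ = 0) : f =ᵐ[μ] 0 := by
  have bexp : ∀ t : ℝ, ∀ w : ℝ → ℂ, Integrable w μ →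
      Integrable (fun x => w x * Complex.exp (t * x * Complex.I)) μ := by
    intro t w hw
    refine hw.mul_bdd (c := 1) (by fun_prop) (Eventually.of_forall fun x => ?_)
    rw [← Complex.ofReal_mul, Complex.norm_exp_ofReal_mul_I]
  have hconj : ∀ t : ℝ, ∫ x, (starRingEnd ℂ) (f x) * Complex.exp (t * x * Complex.I) ∂μ = 0 := by
    intro t
    have h1 := congrArg (starRingEnd ℂ) (h (-t))
    rw [← integral_conj, map_zero] at h1
    rw [← h1]
    congr 1
    ext x
    rw [map_mul, ← Complex.exp_conj]
    congr 2
    simp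
  have hcf : Integrable (fun x => (starRingEnd ℂ) (f x)) μ :=
    hf.congr' (by simpa using Complex.continuous_conj.comp_aestronglyMeasurable hf.1) (by simp)
  have hre := real_unique μ (fun x => (f x).re) hf.re (fun t => by
    have e : ∀ x, ((f x).re : ℂ) * Complex.exp (t * x * Complex.I)
        = (f x * Complex.exp (t * x * Complex.I)
          + (starRingEnd ℂ) (f x) * Complex.exp (t * x * Complex.I)) * (1 / 2) := by
      intro x
      rw [← add_mul, Complex.add_conj]; push_cast; ring
    simp only [e]
    rw [integral_mul_const, integral_add (bexp t f hf) (bexp t _ hcf), h, hconj]; simp)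
  have him := real_unique μ (fun x => (f x).im) hf.im (fun t => by
    have e : ∀ x, ((f x).im : ℂ) * Complex.exp (t * x * Complex.I)
        = (f x * Complex.exp (t * x * Complex.I)
          - (starRingEnd ℂ) (f x) * Complex.exp (t * x * Complex.I)) * (1 / (2 * Complex.I)) := by
      intro x
      rw [← sub_mul, Complex.sub_conj]; push_cast; field_simp
    simp only [e]
    rw [integral_mul_const, integral_sub (bexp t f hf) (bexp t _ hcf), h, hconj]; simp)
  filter_upwards [hre, him] with x h1 h2
  exact Complex.ext h1 h2

/-- Exponential function. -/
def ex (t : ℝ) (x : ℝ) : ℂ := Complex.exp (2 * Real.pi * Complex.I * t * x)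

lemma ex_memLp (μ : Measure ℝ) [IsProbabilityMeasure μ] (t : ℝ) : MemLp (ex t) 2 μ := by
  refine MemLp.of_bound (C := 1) ?_ (Eventually.of_forall fun x => ?_)
  · unfold ex
    exact Continuous.aestronglyMeasurable (by fun_prop)
  · have : (2 * Real.pi * Complex.I * t * x : ℂ) = ((2 * Real.pi * t * x : ℝ) : ℂ) * Complex.I := by
      push_cast; ring
    unfold ex
    rw [this, Complex.norm_exp_ofReal_mul_I]

lemma ex_conj (t x : ℝ) : (starRingEnd ℂ) (ex t x) = Complex.exp (-(2 * Real.pi * Complex.I * t * x)) := by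
  unfold ex
  rw [← Complex.exp_conj]
  congr 1
  simp [map_ofNat]

lemma inner_ex (μ : Measure ℝ) [IsProbabilityMeasure μ] (t : ℝ) (f : ℝ → ℂ) (hf : MemLp f 2 μ) :
    inner ℂ ((ex_memLp μ t).toLp (ex t)) (hf.toLp f)
      = ∫ x : ℝ, f x * Complex.exp (-(2 * Real.pi * Complex.I * t * x)) ∂μ := by
  rw [L2.inner_def]
  refine integral_congr_ae ?_
  filter_upwards [(ex_memLp μ t).coeFn_toLp, hf.coeFn_toLp] with x h1 h2
  rw [h1, h2, RCLike.inner_apply, ex_conj]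

lemma inner_ex_ex (μ : Measure ℝ) [IsProbabilityMeasure μ] (t s : ℝ) :
    inner ℂ ((ex_memLp μ t).toLp (ex t)) ((ex_memLp μ s).toLp (ex s))
      = charFun μ (2 * π * (s - t)) := by
  rw [inner_ex, charFun_apply_real]
  congr 1
  ext x
  unfold ex
  rw [← Complex.exp_add]
  congr 1
  push_cast; ring

lemma spectral_of_parseval (μ : Measure ℝ) [IsProbabilityMeasure μ] (T : Set ℤ)
    (horth : ∀ a ∈ T, ∀ b ∈ T, a ≠ b → charFun μ (2 * π * ((a : ℝ) - b)) = 0)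
    (hQ : ∀ ξ : ℝ, HasSum (fun l : T => ‖charFun μ (2 * π * (ξ + (l : ℤ)))‖ ^ 2) 1) :
    IsSpectralMeasure μ := by
  refine ⟨(fun l : ℤ => (l : ℝ)) '' T, (Set.to_countable T).image _, ?_, ?_⟩
  · rintro _ ⟨a, ha, rfl⟩ _ ⟨b, hb, rfl⟩ hab
    have h1 := horth a ha b hb (fun h => hab (by rw [h]))
    rw [charFun_apply_real] at h1
    rw [← h1]
    congr 1
    ext x
    congr 1
    push_cast; ring
  · intro f hf hl
    have hv : Orthonormal ℂ (fun l : T => (ex_memLp μ ((l : ℤ) : ℝ)).toLp (ex ((l : ℤ) : ℝ))) := by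
      classical
      rw [orthonormal_iff_ite]
      intro a b
      rw [inner_ex_ex]
      split_ifs with hab
      · subst hab; simp
      · exact horth b b.2 a a.2 (fun h => hab (Subtype.ext h.symm))
    have hzero : ∀ ξ : ℝ, ∫ x : ℝ, f x * Complex.exp (-(2 * Real.pi * Complex.I * ξ * x)) ∂μ = 0 := by
      intro ξ
      rw [← inner_ex μ ξ f hf, ← inner_conj_symm]
      rw [hilb _ hv ((ex_memLp μ ξ).toLp (ex ξ)) (hf.toLp f) ?_ ?_, map_zero]
      · have hn : ‖(ex_memLp μ ξ).toLp (ex ξ)‖ ^ 2 = 1 := by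
          rw [← inner_self_eq_norm_sq (𝕜 := ℂ) ((ex_memLp μ ξ).toLp (ex ξ)), inner_ex_ex]
          simp
        rw [hn]
        convert hQ (-ξ) using 2 with l
        rw [inner_ex_ex]
        have : 2 * π * (ξ - ((l : ℤ) : ℝ)) = - (2 * π * (-ξ + ((l : ℤ) : ℝ))) := by ring
        rw [this, charFun_neg, RCLike.norm_conj]
      · intro l
        rw [inner_ex]
        have := hl _ ⟨l, l.2, rfl⟩
        exact this
    apply complex_unique μ f (hf.integrable (by norm_num))
    intro t
    rw [← hzero (-(t / (2 * π)))]
    congr 1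
    ext x
    congr 2
    have : (π : ℂ) ≠ 0 := by exact_mod_cast Real.pi_ne_zero
    push_cast; field_simp

lemma T3_data {p : ℕ → ℕ} {D : ℕ → Finset ℕ} {n : ℕ} (h : T3cond p D n) (hp : 1 < p n) :
    ∃ r : ℤ, r ≠ 0 ∧ Had (D n) (p n) {0, r} := by
  obtain ⟨d, h1, h2, h3, h4⟩ := h
  rw [h4]
  exact had_pair d (p n) h1 (by omega) h3

lemma T1_card {p : ℕ → ℕ} {D : ℕ → Finset ℕ} {n : ℕ} (h : T1cond p D n) : 3 ≤ (D n).card := by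
  obtain ⟨N, h1, h2, h3, h4⟩ := h
  rw [h4, Finset.card_range]; omega

lemma T2_card {p : ℕ → ℕ} {D : ℕ → Finset ℕ} {n : ℕ} (h : T2cond p D n) : (D n).card = 3 := by
  obtain ⟨a, b, h1, h2, h3, h4, h5, h6⟩ := h
  rw [h6, Finset.card_eq_three]
  exact ⟨0, a, b, by omega, by omega, by omega, rfl⟩

lemma had_any {p : ℕ → ℕ} {D : ℕ → Finset ℕ} {n : ℕ}
    (h : T1cond p D n ∨ T2cond p D n ∨ T3cond p D n) (hp : 1 < p n) :
    (D n).Nonempty ∧ ∃ L, Had (D n) (p n) L := by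
  rcases h with h | h | h
  · have hc := T1_card h
    have hne : (D n).Nonempty := Finset.card_pos.1 (by omega)
    obtain ⟨N, h1, h2, h3, h4⟩ := h
    refine ⟨hne, had_of_mod _ _ hne (by omega) ?_ ?_⟩
    · rw [h4, Finset.card_range]; exact h2
    · rw [h4, Finset.card_range]
      intro a ha b hb hab
      rw [Finset.mem_range] at ha hb
      rwa [Nat.mod_eq_of_lt ha, Nat.mod_eq_of_lt hb] at hab
  · have hc := T2_card h
    have hne : (D n).Nonempty := Finset.card_pos.1 (by omega)
    obtain ⟨a, b, h1, h2, h3, h4, h5, h6⟩ := h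
    refine ⟨hne, had_of_mod _ _ hne (by omega) ?_ ?_⟩
    · rw [hc]; exact h5
    · rw [hc, h6]
      intro x hx y hy hxy
      simp only [Finset.mem_insert, Finset.mem_singleton] at hx hy
      omega
  · obtain ⟨r, -, hr⟩ := T3_data h hp
    refine ⟨?_, _, hr⟩
    obtain ⟨d, h1, h2, h3, h4⟩ := h
    rw [h4]; simp

/-- Proposition 5.3. If `(p, D)` satisfies (T1)–(T3) and only
finitely many `n` have `#(D n) ≥ 3`, then the Moran measure is spectral. -/
theorem moran_spectral_of_finitely_many_large (p : ℕ → ℕ) (D : ℕ → Finset ℕ)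
    (μ : Measure ℝ) (hp : ∀ n, 1 ≤ n → 1 < p n) (hT : SatisfiesT p D)
    (hfin : {n : ℕ | 1 ≤ n ∧ 3 ≤ (D n).card}.Finite) (hμ : IsMoran p D μ) :
    IsSpectralMeasure μ := by
  obtain ⟨n0, hn0⟩ := hfin.bddAbove
  have hne : ∀ n, 1 ≤ n → (D n).Nonempty := fun n hn => (had_any (hT.1 n hn) (hp n hn)).1
  have hT3 : ∀ n, n0 < n → T3cond p D n := by
    intro n hn
    have hnot : ¬ 3 ≤ (D n).card := fun h => by
      have := hn0 (show n ∈ {n : ℕ | 1 ≤ n ∧ 3 ≤ (D n).card} from ⟨by omega, h⟩)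
      omega
    rcases hT.1 n (by omega) with h | h | h
    · exact absurd (T1_card h) hnot
    · exact absurd (T2_card h).ge hnot
    · exact h
  have hd : ∀ n, ∃ d, n0 < n → 0 < d ∧ d < p n ∧ D n = {0, d} := by
    intro n
    by_cases hn : n0 < n
    · obtain ⟨d, h1, h2, h3, h4⟩ := hT3 n hn
      exact ⟨d, fun _ => ⟨h1, h2, h4⟩⟩
    · exact ⟨0, fun h => absurd h hn⟩
  choose d hd using hd
  have hTail : TailCond p D n0 d := fun j hj => hd j hj
  obtain ⟨S, hmono, hS⟩ := exists_chain p hp D hne n0 d hTail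
    (fun n hn => (had_any (hT.1 n hn) (hp n hn)).2)
    (fun n hn => T3_data (hT3 n hn) (hp n (by omega)))
  have hprob : IsProbabilityMeasure μ := hμ.1
  refine spectral_of_parseval μ {l : ℤ | ∃ i, l ∈ S i} ?_ ?_
  · rintro a ⟨i, hi⟩ b ⟨j, hj⟩ hab
    have hM : Monotone S := monotone_nat_of_le_succ hmono
    have ha : a ∈ S (max i j) := hM (le_max_left i j) hi
    have hb : b ∈ S (max i j) := hM (le_max_right i j) hj
    have hz : fh p D (n0 + max i j) ((a : ℝ) - b) = 0 := by
      have h1 := (hS (max i j)).1 (-b)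
      have h2 : ∑ c ∈ ({b, a} : Finset ℤ), ‖fh p D (n0 + max i j) (-b + c)‖ ^ 2
          ≤ ∑ c ∈ S (max i j), ‖fh p D (n0 + max i j) (-b + c)‖ ^ 2 := by
        refine Finset.sum_le_sum_of_subset_of_nonneg ?_ (fun _ _ _ => by positivity)
        intro c hc
        simp only [Finset.mem_insert, Finset.mem_singleton] at hc
        rcases hc with rfl | rfl
        · exact hb
        · exact ha
      rw [h1, Finset.sum_pair (Ne.symm hab), neg_add_cancel, fh_zero p D hne, norm_one] at h2
      have h3 : ‖fh p D (n0 + max i j) (-b + a)‖ = 0 := by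
        have := norm_nonneg (fh p D (n0 + max i j) (-b + a))
        nlinarith
      rw [← norm_eq_zero, sub_eq_neg_add]
      exact h3
    refine tendsto_nhds_unique (fh_tendsto p D hne μ hμ ((a : ℝ) - b)) ?_
    refine tendsto_const_nhds.congr' ?_
    filter_upwards [eventually_ge_atTop (n0 + max i j)] with m hm
    exact (fh_zero_of_le p D hm _ hz).symm
  · intro ξ
    exact chain_parseval p hp D hne n0 d hTail μ hμ S hmono (fun i => (hS i).1)
      (fun i => (hS i).2) ξ

end
end

section
/- Let (p_n)_{n≥1} be a sequence of nonzero integers with |p_n| > 1 and (𝒟_n)_{n≥1} a sequence of finite subsets of ℤ containing 0, with sup_n max_{d∈𝒟_n} |d|/|p_n| < ∞. Let θ_n ∈ {−1,1} and γ_n ∈ {0, max_{d∈𝒟_n}|d|} for each n. Then for all ξ ∈ ℝ, |μ̂_{(θ_n p_n),(𝒟_n+γ_n)}(ξ)| = |μ̂_{(p_n),(𝒟_n)}(ξ)|; consequently μ_{(p_n),(𝒟_n)} is a spectral measure if and only if μ_{(θ_n p_n),(𝒟_n+γ_n)} is a spectral measure. -/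
open MeasureTheory Filter Finset Real
open scoped ENNReal NNReal

noncomputable section

/-- `Q n = q 1 * ⋯ * q n` for an integer sequence. -/
def PprodZ (q : ℕ → ℤ) (n : ℕ) : ℤ := ∏ i ∈ Finset.Icc 1 n, q i

/-- Uniform probability measure on `s • E ⊆ ℝ` for a finite set of integers. -/
def unifDZ (E : Finset ℤ) (s : ℝ) : Measure ℝ :=
  (E.card : ℝ≥0∞)⁻¹ • ∑ d ∈ E, Measure.dirac (s * (d : ℝ))

/-- The finite convolutions `δ_{Q₁⁻¹E₁} ∗ ⋯ ∗ δ_{Qₙ⁻¹Eₙ}`. -/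
def muNZ (q : ℕ → ℤ) (E : ℕ → Finset ℤ) : ℕ → Measure ℝ
  | 0 => Measure.dirac 0
  | n + 1 => Measure.conv (muNZ q E n) (unifDZ (E (n + 1)) ((PprodZ q (n + 1) : ℝ)⁻¹))

/-- `μ` is the Moran measure of the integer data `(q, E)`. -/
def IsMoranZ (q : ℕ → ℤ) (E : ℕ → Finset ℤ) (μ : Measure ℝ) : Prop :=
  IsProbabilityMeasure μ ∧ IsWeakLimit (muNZ q E) μ

lemma charFun_unifDZ (E : Finset ℤ) (s t : ℝ) :
    charFun (unifDZ E s) t = (E.card : ℂ)⁻¹ * ∑ d ∈ E, Complex.exp (t * (s * d) * Complex.I) := by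
  rw [charFun_apply_real, unifDZ, integral_smul_measure, integral_finsetSum_measure]
  · simp [integral_dirac]
  · intro i _
    exact integrable_dirac (by simp)

instance unifDZ_finite (E : Finset ℤ) (s : ℝ) : IsFiniteMeasure (unifDZ E s) := by
  rcases E.eq_empty_or_nonempty with rfl | h
  · simp only [unifDZ, Finset.sum_empty, smul_zero]
    infer_instance
  · refine ⟨?_⟩
    have : (E.card : ℝ≥0∞) ≠ 0 := by simpa using h.ne_empty
    simp only [unifDZ, Measure.smul_apply, Measure.finsetSum_apply, measure_univ, smul_eq_mul]
    exact ENNReal.mul_lt_top (ENNReal.inv_lt_top.2 (pos_iff_ne_zero.2 this)) (by simp)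

instance muNZ_finite (q : ℕ → ℤ) (E : ℕ → Finset ℤ) (n : ℕ) : IsFiniteMeasure (muNZ q E n) := by
  induction n with
  | zero => simp only [muNZ]; infer_instance
  | succ n ih => simp only [muNZ]; infer_instance

lemma norm_charFun_neg (μ : Measure ℝ) (t : ℝ) : ‖charFun μ (-t)‖ = ‖charFun μ t‖ := by
  rw [charFun_neg]; simp

lemma unif_norm (E : Finset ℤ) (g : ℤ) (s s' t : ℝ) (h : s' = s ∨ s' = -s) :
    ‖charFun (unifDZ (E.image (fun d => d + g)) s') t‖ = ‖charFun (unifDZ E s) t‖ := by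
  have h1 : ∀ r, ‖charFun (unifDZ (E.image (fun d => d + g)) r) t‖ = ‖charFun (unifDZ E r) t‖ := by
    intro r
    have hinj : Function.Injective (fun d : ℤ => d + g) := add_left_injective g
    rw [charFun_unifDZ, charFun_unifDZ, Finset.card_image_of_injective _ hinj,
      Finset.sum_image (fun a _ b _ hab => hinj hab)]
    have : ∀ d : ℤ, Complex.exp (t * (r * ((d + g : ℤ) : ℂ)) * Complex.I)
        = Complex.exp (((t * (r * g) : ℝ) : ℂ) * Complex.I) *
          Complex.exp (t * (r * d) * Complex.I) := by
      intro d
      rw [← Complex.exp_add]; congr 1; push_cast; ring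
    simp_rw [this]
    rw [← Finset.mul_sum, norm_mul, norm_mul, norm_mul, Complex.norm_exp_ofReal_mul_I, one_mul]
  rw [h1]
  rcases h with rfl | rfl
  · rfl
  · rw [← norm_charFun_neg (unifDZ E s), charFun_unifDZ, charFun_unifDZ]
    congr 3; ext d; congr 1; push_cast; ring

lemma PprodZ_sign (q θ : ℕ → ℤ) (hθ : ∀ n, θ n = 1 ∨ θ n = -1) (n : ℕ) :
    PprodZ (fun n => θ n * q n) n = PprodZ q n ∨ PprodZ (fun n => θ n * q n) n = -PprodZ q n := by
  have : PprodZ θ n = 1 ∨ PprodZ θ n = -1 := by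
    rw [← Int.isUnit_iff]
    unfold PprodZ
    rw [IsUnit.prod_iff]
    intro i _
    exact Int.isUnit_iff.2 (hθ i)
  have h2 : PprodZ (fun n => θ n * q n) n = PprodZ θ n * PprodZ q n := Finset.prod_mul_distrib
  rcases this with h | h <;> simp [h2, h]

lemma muNZ_norm (q : ℕ → ℤ) (E : ℕ → Finset ℤ) (θ γ : ℕ → ℤ) (hθ : ∀ n, θ n = 1 ∨ θ n = -1)
    (n : ℕ) (t : ℝ) :
    ‖charFun (muNZ (fun n => θ n * q n) (fun n => (E n).image (fun d => d + γ n)) n) t‖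
      = ‖charFun (muNZ q E n) t‖ := by
  induction n with
  | zero => rfl
  | succ n ih =>
    simp only [muNZ]
    rw [charFun_conv, charFun_conv, norm_mul, norm_mul, ih]
    congr 1
    apply unif_norm
    rcases PprodZ_sign q θ hθ (n + 1) with h | h
    · left; rw [h]
    · right; rw [h]; push_cast; rw [inv_neg]

lemma weak_charFun (ν : ℕ → Measure ℝ) [∀ n, IsFiniteMeasure (ν n)] (μ : Measure ℝ)
    [IsFiniteMeasure μ] (h : IsWeakLimit ν μ) (t : ℝ) :
    Tendsto (fun n => charFun (ν n) t) atTop (nhds (charFun μ t)) := by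
  have key : ∀ (ρ : Measure ℝ) [IsFiniteMeasure ρ], charFun ρ t =
      ((∫ x, Real.cos (t * x) ∂ρ : ℝ) : ℂ) + ((∫ x, Real.sin (t * x) ∂ρ : ℝ) : ℂ) * Complex.I := by
    intro ρ _
    have hc : Integrable (fun x => Real.cos (t * x)) ρ :=
      Integrable.of_bound (by fun_prop) 1 (by
        refine Eventually.of_forall fun x => ?_
        simpa using Real.abs_cos_le_one _)
    have hs : Integrable (fun x => Real.sin (t * x)) ρ :=
      Integrable.of_bound (by fun_prop) 1 (by
        refine Eventually.of_forall fun x => ?_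
        simpa using Real.abs_sin_le_one _)
    rw [charFun_apply_real, ← integral_complex_ofReal, ← integral_complex_ofReal,
      ← integral_mul_const, ← integral_add hc.ofReal (hs.ofReal.mul_const _)]
    congr 1; ext x
    rw [← Complex.ofReal_mul, Complex.exp_mul_I]
    simp
  simp_rw [key]
  have hc := h (BoundedContinuousFunction.ofNormedAddCommGroup (fun x => Real.cos (t * x))
    (by fun_prop) 1 (fun x => by simpa using Real.abs_cos_le_one _))
  have hs := h (BoundedContinuousFunction.ofNormedAddCommGroup (fun x => Real.sin (t * x))
    (by fun_prop) 1 (fun x => by simpa using Real.abs_sin_le_one _))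
  simp only [BoundedContinuousFunction.coe_ofNormedAddCommGroup] at hc hs
  exact ((Complex.continuous_ofReal.tendsto _).comp hc).add
    (((Complex.continuous_ofReal.tendsto _).comp hs).mul_const _)

lemma FT_eq_charFun (μ : Measure ℝ) (ξ : ℝ) : FT μ ξ = charFun μ (-(2 * Real.pi * ξ)) := by
  rw [charFun_apply_real, FT]
  congr 1; ext x; congr 1; push_cast; ring

/-- A function all of whose Fourier coefficients vanish is zero (real case). -/
lemma real_uniq (μ : Measure ℝ) [IsFiniteMeasure μ] (g : ℝ → ℝ) (hg : Integrable g μ)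
    (h : ∀ t : ℝ, ∫ x, (g x : ℂ) * Complex.exp (t * x * Complex.I) ∂μ = 0) : g =ᵐ[μ] 0 := by
  have hp := hg.real_toNNReal
  have hm := hg.neg.real_toNNReal
  have f1 : IsFiniteMeasure (μ.withDensity fun x => ENNReal.ofReal (g x)) :=
    isFiniteMeasure_withDensity_ofReal hg.2
  have f2 : IsFiniteMeasure (μ.withDensity fun x => ENNReal.ofReal ((-g) x)) :=
    isFiniteMeasure_withDensity_ofReal hg.neg.2
  have cf : ∀ (k : ℝ → ℝ) (hk : Integrable k μ) (t : ℝ),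
      charFun (μ.withDensity fun x => ENNReal.ofReal (k x)) t =
        ∫ x, ((k x).toNNReal : ℂ) * Complex.exp (t * x * Complex.I) ∂μ := by
    intro k hk t
    rw [charFun_apply_real]
    have := integral_withDensity_eq_integral_smul₀ (μ := μ) (f := fun x => (k x).toNNReal)
      hk.1.aemeasurable.real_toNNReal (fun x : ℝ => Complex.exp (t * x * Complex.I))
    rw [show (fun x => ENNReal.ofReal (k x)) = fun x => ((k x).toNNReal : ℝ≥0∞) from rfl, this]
    congr 1
  have heq : (μ.withDensity fun x => ENNReal.ofReal (g x)) =
      μ.withDensity fun x => ENNReal.ofReal ((-g) x) := by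
    apply Measure.ext_of_charFun
    ext t
    rw [cf g hg, cf (-g) hg.neg, ← sub_eq_zero]
    have hi : ∀ (k : ℝ → ℝ) (hk : Integrable k μ), Integrable
        (fun x => ((k x).toNNReal : ℂ) * Complex.exp (t * x * Complex.I)) μ := by
      intro k hk
      have h1 : Integrable (fun x => (((k x).toNNReal : ℝ) : ℂ)) μ := hk.real_toNNReal.ofReal
      refine h1.mul_bdd (c := 1) (by fun_prop) (Eventually.of_forall fun x => ?_)
      rw [← Complex.ofReal_mul, Complex.norm_exp_ofReal_mul_I]
    rw [← integral_sub (hi g hg) (hi (-g) hg.neg), ← h t]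
    congr 1; ext x
    rw [← sub_mul]
    congr 1
    have : (((g x).toNNReal : ℝ) : ℂ) - ((((-g) x).toNNReal : ℝ) : ℂ) = (g x : ℂ) := by
      rw [← Complex.ofReal_sub]
      congr 1
      simp only [Real.coe_toNNReal', Pi.neg_apply]
      rcases le_total (g x) 0 with h | h
      · rw [max_eq_right h, max_eq_left (by linarith)]; ring
      · rw [max_eq_left h, max_eq_right (by linarith)]; ring
    exact this
  have hae := (withDensity_eq_iff hg.1.aemeasurable.ennreal_ofReal
    hg.neg.1.aemeasurable.ennreal_ofReal (by
      have := f1.measure_univ_lt_top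
      rw [withDensity_apply _ MeasurableSet.univ, Measure.restrict_univ] at this
      exact this.ne)).1 heq
  filter_upwards [hae] with x hx
  simp only [Pi.neg_apply] at hx
  rcases lt_trichotomy (g x) 0 with h | h | h
  · rw [ENNReal.ofReal_of_nonpos h.le] at hx
    have := ENNReal.ofReal_eq_zero.1 hx.symm
    linarith
  · exact h
  · rw [ENNReal.ofReal_of_nonpos (p := -g x) (by linarith)] at hx
    have := ENNReal.ofReal_eq_zero.1 hx
    linarith

lemma cplx_uniq (μ : Measure ℝ) [IsFiniteMeasure μ] (f : ℝ → ℂ) (hf : Integrable f μ)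
    (h : ∀ t : ℝ, ∫ x, f x * Complex.exp (t * x * Complex.I) ∂μ = 0) : f =ᵐ[μ] 0 := by
  have hi : ∀ (k : ℝ → ℂ) (hk : Integrable k μ) (t : ℝ), Integrable
      (fun x => k x * Complex.exp (t * x * Complex.I)) μ := by
    intro k hk t
    refine hk.mul_bdd (c := 1) (by fun_prop) (Eventually.of_forall fun x => ?_)
    rw [← Complex.ofReal_mul, Complex.norm_exp_ofReal_mul_I]
  have hcI : Integrable (fun x => (starRingEnd ℂ) (f x)) μ :=
    (Complex.conjCLE.toContinuousLinearMap).integrable_comp hf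
  have hc : ∀ t : ℝ, ∫ x, (starRingEnd ℂ) (f x) * Complex.exp (t * x * Complex.I) ∂μ = 0 := by
    intro t
    have := congrArg (starRingEnd ℂ) (h (-t))
    rw [← integral_conj, map_zero] at this
    rw [← this]
    congr 1; ext x
    rw [map_mul, ← Complex.exp_conj]
    simp
  have hre : (fun x => (f x).re) =ᵐ[μ] 0 := by
    apply real_uniq μ _ hf.re
    intro t
    have e : ∀ x : ℝ, ((f x).re : ℂ) * Complex.exp (t * x * Complex.I) =
      (1/2 : ℂ) * (f x * Complex.exp (t * x * Complex.I) +
        (starRingEnd ℂ) (f x) * Complex.exp (t * x * Complex.I)) := by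
      intro x
      rw [Complex.re_eq_add_conj]; ring
    refine (integral_congr_ae (Eventually.of_forall e)).trans ?_
    rw [integral_const_mul, integral_add (hi _ hf t) (hi _ hcI t), h, hc]; simp
  have him : (fun x => (f x).im) =ᵐ[μ] 0 := by
    apply real_uniq μ _ hf.im
    intro t
    have e : ∀ x : ℝ, ((f x).im : ℂ) * Complex.exp (t * x * Complex.I) =
      (1/(2 * Complex.I) : ℂ) * (f x * Complex.exp (t * x * Complex.I) -
        (starRingEnd ℂ) (f x) * Complex.exp (t * x * Complex.I)) := by
      intro x
      rw [Complex.im_eq_sub_conj]; ring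
    refine (integral_congr_ae (Eventually.of_forall e)).trans ?_
    rw [integral_const_mul, integral_sub (hi _ hf t) (hi _ hcI t), h, hc]; simp
  filter_upwards [hre, him] with x h1 h2
  exact Complex.ext h1 h2

lemma memLp_exp (μ : Measure ℝ) [IsFiniteMeasure μ] (ξ : ℝ) :
    MemLp (fun x : ℝ => Complex.exp (2 * Real.pi * Complex.I * ξ * x)) 2 μ := by
  refine MemLp.of_bound (by fun_prop) 1 (Eventually.of_forall fun x => ?_)
  rw [show (2 * Real.pi * Complex.I * ξ * x : ℂ) = ((2 * Real.pi * ξ * x : ℝ) : ℂ) * Complex.I by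
    push_cast; ring, Complex.norm_exp_ofReal_mul_I]

/-- The exponential `e_ξ` as an element of `L²(μ)`. -/
def eL (μ : Measure ℝ) [IsFiniteMeasure μ] (ξ : ℝ) : Lp ℂ 2 μ := (memLp_exp μ ξ).toLp _

lemma inner_eL (μ : Measure ℝ) [IsFiniteMeasure μ] (ξ : ℝ) (f : ℝ → ℂ) (hf : MemLp f 2 μ) :
    inner ℂ (eL μ ξ) (hf.toLp f) =
      ∫ x : ℝ, f x * Complex.exp (-(2 * Real.pi * Complex.I * ξ * x)) ∂μ := by
  rw [L2.inner_def]
  apply integral_congr_ae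
  filter_upwards [hf.coeFn_toLp, (memLp_exp μ ξ).coeFn_toLp] with x h1 h2
  rw [h1, eL, h2, RCLike.inner_apply, ← Complex.exp_conj]
  simp [Complex.conj_ofNat]

lemma inner_eL_eL (μ : Measure ℝ) [IsFiniteMeasure μ] (a b : ℝ) :
    inner ℂ (eL μ a) (eL μ b) = FT μ (a - b) := by
  rw [eL.eq_1 μ b, inner_eL, FT]
  congr 1; ext x
  rw [← Complex.exp_add]; congr 1; push_cast; ring

lemma norm_eL (μ : Measure ℝ) [IsProbabilityMeasure μ] (a : ℝ) : ‖eL μ a‖ = 1 := by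
  have := inner_self_eq_norm_sq_to_K (𝕜 := ℂ) (eL μ a)
  rw [inner_eL_eL, sub_self] at this
  simp only [FT, Complex.ofReal_zero, mul_zero, neg_zero, Complex.exp_zero, integral_const,
    probReal_univ, one_smul] at this
  have h2 : (‖eL μ a‖) ^ 2 = 1 := by
    have h3 : ((‖eL μ a‖ ^ 2 : ℝ) : ℂ) = ((1 : ℝ) : ℂ) := by
      rw [Complex.ofReal_one, Complex.ofReal_pow]; exact this.symm
    exact Complex.ofReal_injective h3
  exact (pow_eq_one_iff_of_nonneg (norm_nonneg _) two_ne_zero).1 h2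

lemma orth_iff (μ : Measure ℝ) (Λ : Set ℝ) :
    IsOrthSet μ Λ ↔ ∀ l ∈ Λ, ∀ l' ∈ Λ, l ≠ l' → ‖FT μ (l - l')‖ = 0 := by
  have : ∀ l l' : ℝ, ∫ x : ℝ, Complex.exp (2 * Real.pi * Complex.I * (l - l') * x) ∂μ
      = FT μ (l' - l) := by
    intro l l'
    rw [FT]; congr 1; ext x; congr 1; push_cast; ring
  unfold IsOrthSet
  simp_rw [this, norm_eq_zero]
  exact ⟨fun h l hl l' hl' hne => h l' hl' l hl hne.symm,
    fun h l hl l' hl' hne => h l' hl' l hl hne.symm⟩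

/-- Jorgensen-Pedersen criterion. -/
lemma spectrum_iff (μ : Measure ℝ) [IsProbabilityMeasure μ] (Λ : Set ℝ) :
    IsSpectrum μ Λ ↔ (∀ l ∈ Λ, ∀ l' ∈ Λ, l ≠ l' → ‖FT μ (l - l')‖ = 0) ∧
      ∀ ξ : ℝ, HasSum (fun l : Λ => ‖FT μ (l - ξ)‖ ^ 2) 1 := by
  rw [IsSpectrum, orth_iff]
  refine and_congr_right fun ho => ?_
  have hon : Orthonormal ℂ (fun l : Λ => eL μ (l : ℝ)) := by
    refine ⟨fun l => norm_eL μ _, fun a b hab => ?_⟩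
    simp only
    rw [inner_eL_eL]
    exact norm_eq_zero.1 (ho a a.2 b b.2 (fun h => hab (Subtype.ext h)))
  constructor
  · intro hcomp ξ
    have hbot : (Submodule.span ℂ (Set.range (fun l : Λ => eL μ (l : ℝ))))ᗮ = ⊥ := by
      rw [Submodule.eq_bot_iff]
      intro f hf
      have hfz := hcomp f (Lp.memLp f) (by
        intro l hl
        rw [← inner_eL μ l f (Lp.memLp f), Lp.toLp_coeFn]
        exact (Submodule.mem_orthogonal _ _).1 hf _ (Submodule.subset_span ⟨⟨l, hl⟩, rfl⟩))
      exact (Lp.eq_zero_iff_ae_eq_zero).2 hfz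
    let b := HilbertBasis.mkOfOrthogonalEqBot hon hbot
    have hb := b.hasSum_inner_mul_inner (eL μ ξ) (eL μ ξ)
    have hcoe : ∀ l : Λ, b l = eL μ (l : ℝ) := fun l => by
      simp [b]
    rw [inner_eL_eL, sub_self] at hb
    have h1 : FT μ 0 = 1 := by simp [FT]
    rw [h1] at hb
    have hb2 := Complex.hasSum_re hb
    rw [Complex.one_re] at hb2
    convert hb2 using 2 with l
    rw [hcoe, ← inner_conj_symm (eL μ ξ), inner_eL_eL, Complex.conj_mul', ← Complex.ofReal_pow,
      Complex.ofReal_re]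
  · intro hsum f hf hfo
    have hall : ∀ ξ : ℝ, inner ℂ (eL μ ξ) (hf.toLp f) = 0 := by
      intro ξ
      set F := hf.toLp f with hF
      have hF0 : ∀ l : Λ, inner ℂ (eL μ (l : ℝ)) F = 0 := fun l => by
        rw [hF, inner_eL]; exact hfo l l.2
      have bound : ∀ s : Finset Λ, ‖inner ℂ (eL μ ξ) F‖ ^ 2 ≤
          (1 - ∑ l ∈ s, ‖FT μ (l - ξ)‖ ^ 2) * ‖F‖ ^ 2 := by
        intro s
        set y := ∑ l ∈ s, (inner ℂ (eL μ (l : ℝ)) (eL μ ξ)) • eL μ (l : ℝ) with hy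
        have hyF : inner ℂ y F = 0 := by
          rw [hy, sum_inner]
          exact Finset.sum_eq_zero fun l _ => by rw [inner_smul_left, hF0, mul_zero]
        have e1 : inner ℂ (eL μ ξ) F = inner ℂ (eL μ ξ - y) F := by
          rw [inner_sub_left, hyF, sub_zero]
        have e2 : ‖eL μ ξ - y‖ ^ 2 = 1 - ∑ l ∈ s, ‖FT μ (l - ξ)‖ ^ 2 := by
          have hy1 : inner ℂ y (eL μ ξ) = ((∑ l ∈ s, ‖FT μ (l - ξ)‖ ^ 2 : ℝ) : ℂ) := by
            rw [hy, sum_inner]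
            push_cast
            refine Finset.sum_congr rfl fun l _ => ?_
            rw [inner_smul_left, inner_eL_eL, Complex.conj_mul']
          have hy2 : ‖y‖ ^ 2 = ∑ l ∈ s, ‖FT μ (l - ξ)‖ ^ 2 := by
            have := hon.inner_sum (fun l : Λ => inner ℂ (eL μ (l : ℝ)) (eL μ ξ))
              (fun l : Λ => inner ℂ (eL μ (l : ℝ)) (eL μ ξ)) s
            rw [← hy, inner_self_eq_norm_sq_to_K] at this
            have h3 : ((‖y‖ ^ 2 : ℝ) : ℂ) = ((∑ l ∈ s, ‖FT μ (l - ξ)‖ ^ 2 : ℝ) : ℂ) := by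
              push_cast
              refine this.trans (Finset.sum_congr rfl fun l _ => ?_)
              rw [inner_eL_eL, Complex.conj_mul']
            exact_mod_cast h3
          rw [norm_sub_sq (𝕜 := ℂ), norm_eL, ← inner_re_symm, hy1, hy2]
          simp only [RCLike.re_to_complex, Complex.ofReal_re]
          ring
        rw [e1, ← e2, ← mul_pow]
        gcongr
        exact norm_inner_le_norm _ _
      have lim : Tendsto (fun s : Finset Λ => (1 - ∑ l ∈ s, ‖FT μ (l - ξ)‖ ^ 2) * ‖F‖ ^ 2) atTop
          (nhds ((1 - 1) * ‖F‖ ^ 2)) := ((hsum ξ).const_sub 1).mul_const _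
      have := ge_of_tendsto' lim bound
      rw [sub_self, zero_mul] at this
      have h0 : ‖inner ℂ (eL μ ξ) F‖ ^ 2 = 0 := le_antisymm this (by positivity)
      exact norm_eq_zero.1 (pow_eq_zero_iff two_ne_zero |>.1 h0)
    apply cplx_uniq μ f (hf.integrable (by norm_num))
    intro t
    rw [← hall (-(t / (2 * Real.pi))), inner_eL]
    congr 1; ext x; congr 2
    have : (Real.pi : ℂ) ≠ 0 := by exact_mod_cast Real.pi_ne_zero
    push_cast
    field_simp

/-- Lemma 2.2. Flipping signs of the `p_n` and translating the
digit sets by `γ_n ∈ {0, max |D_n|}` does not change `|μ̂|`; consequently one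
measure is spectral iff the other is. -/
theorem spectrality_invariance (q : ℕ → ℤ) (E : ℕ → Finset ℤ)
    (hq : ∀ n, 1 ≤ n → 1 < |q n|) (h0 : ∀ n, 1 ≤ n → (0 : ℤ) ∈ E n)
    (hbd : ∃ C : ℝ, ∀ n, 1 ≤ n → ∀ d ∈ E n, |(d : ℝ)| ≤ C * |(q n : ℝ)|)
    (θ γ : ℕ → ℤ) (hθ : ∀ n, θ n = 1 ∨ θ n = -1)
    (hγ : ∀ n, 1 ≤ n → γ n = 0 ∨ γ n = (((E n).sup (fun d => d.natAbs) : ℕ) : ℤ))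
    (μ μ' : Measure ℝ) (hμ : IsMoranZ q E μ)
    (hμ' : IsMoranZ (fun n => θ n * q n) (fun n => (E n).image (fun d => d + γ n)) μ') :
    (∀ ξ : ℝ, ‖FT μ' ξ‖ = ‖FT μ ξ‖) ∧ (IsSpectralMeasure μ ↔ IsSpectralMeasure μ') := by
  have := hμ.1
  have := hμ'.1
  have hFT : ∀ ξ : ℝ, ‖FT μ' ξ‖ = ‖FT μ ξ‖ := by
    intro ξ
    rw [FT_eq_charFun, FT_eq_charFun]
    have l1 := (weak_charFun _ μ hμ.2 (-(2 * Real.pi * ξ))).norm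
    have l2 := (weak_charFun _ μ' hμ'.2 (-(2 * Real.pi * ξ))).norm
    simp_rw [muNZ_norm q E θ γ hθ] at l2
    exact tendsto_nhds_unique l2 l1
  refine ⟨hFT, ?_⟩
  unfold IsSpectralMeasure
  simp_rw [spectrum_iff, hFT]

end
end

section
/- Suppose the pair (𝒫,𝒟) satisfies conditions (T1)–(T3). Then for every n ≥ 1 there exists a finite set L_n ⊂ ℤ with #L_n = #𝒟_n such that (p_n, 𝒟_n, L_n) is a Hadamard triple. -/
open MeasureTheory Filter Finset Real
open scoped ENNReal NNReal

noncomputable section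

lemma aux_pow (d : ℕ) (l l' : ℤ) (p : ℕ) :
    Complex.exp (2 * Real.pi * Complex.I * (d : ℝ) * ((l : ℝ) - (l' : ℝ)) / (p : ℝ))
      = Complex.exp (2 * Real.pi * Complex.I * ((l : ℂ) - (l' : ℂ)) / (p : ℂ)) ^ d := by
  rw [← Complex.exp_nat_mul]
  congr 1
  push_cast
  ring

/-- Differences of distinct elements of `q * {0,…,N-1}` give nontrivial `N`-th roots of unity. -/
lemma aux_root (N q : ℕ) (hN : 0 < N) (hq : 0 < q) (l l' : ℤ)
    (hl : l ∈ (Finset.range N).image (fun k : ℕ => (q : ℤ) * k))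
    (hl' : l' ∈ (Finset.range N).image (fun k : ℕ => (q : ℤ) * k)) (hne : l ≠ l') :
    Complex.exp (2 * Real.pi * Complex.I * ((l : ℂ) - (l' : ℂ)) / ((N * q : ℕ) : ℂ)) ^ N = 1 ∧
    Complex.exp (2 * Real.pi * Complex.I * ((l : ℂ) - (l' : ℂ)) / ((N * q : ℕ) : ℂ)) ≠ 1 := by
  simp only [Finset.mem_image, Finset.mem_range] at hl hl'
  obtain ⟨k, hk, rfl⟩ := hl
  obtain ⟨k', hk', rfl⟩ := hl'
  have hN0 : (N : ℂ) ≠ 0 := by exact_mod_cast hN.ne'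
  have hq0 : (q : ℂ) ≠ 0 := by exact_mod_cast hq.ne'
  constructor
  · rw [← Complex.exp_nat_mul, Complex.exp_eq_one_iff]
    refine ⟨(k : ℤ) - k', ?_⟩
    push_cast
    field_simp
  · intro h
    rw [Complex.exp_eq_one_iff] at h
    obtain ⟨m, hm⟩ := h
    push_cast at hm
    have hpi : (2 * Real.pi * Complex.I : ℂ) ≠ 0 := Complex.two_pi_I_ne_zero
    have h1 : ((k : ℂ) - k') = m * N := by
      apply mul_left_cancel₀ hpi
      calc (2 * Real.pi * Complex.I : ℂ) * ((k : ℂ) - k')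
          = (2 * Real.pi * Complex.I * ((q : ℂ) * k - q * k') / (N * q)) * N := by
            field_simp
        _ = _ := by rw [hm]; ring
    have h2 : (k : ℤ) - k' = m * N := by exact_mod_cast h1
    apply hne
    have h3 : (k : ℤ) - k' = 0 := by
      apply Int.eq_zero_of_abs_lt_dvd (m := (N : ℤ)) ⟨m, by rw [h2]; ring⟩
      rw [abs_lt]; omega
    have : (k : ℤ) = k' := by omega
    rw [this]

lemma aux_card (N q : ℕ) (hq : 0 < q) :
    ((Finset.range N).image (fun k : ℕ => (q : ℤ) * k)).card = N := by
  rw [Finset.card_image_of_injective, Finset.card_range]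
  intro a b hab
  have : (q : ℤ) ≠ 0 := by exact_mod_cast hq.ne'
  have := mul_left_cancel₀ this hab
  exact_mod_cast this

lemma aux_geom (z : ℂ) (N : ℕ) (h : z ^ N = 1) (h1 : z ≠ 1) :
    ∑ d ∈ Finset.range N, z ^ d = 0 := by
  rw [geom_sum_eq h1, h]; simp

/-- Lemma 3.2 / pro3.2. Under (T1)–(T3), for every `n ≥ 1` there is
a finite set `L ⊂ ℤ` with `#L = #(D n)` such that `(p n, D n, L)` is a Hadamard
triple, i.e. the matrix `(1/√N)[e^{2πidℓ/pₙ}]` is unitary; equivalently its columns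
are pairwise orthogonal. -/
theorem exists_hadamard_triple (p : ℕ → ℕ) (D : ℕ → Finset ℕ)
    (hp : ∀ n, 1 ≤ n → 1 < p n) (hT : SatisfiesT p D) :
    ∀ n, 1 ≤ n → ∃ L : Finset ℤ, L.card = (D n).card ∧
      ∀ l ∈ L, ∀ l' ∈ L, l ≠ l' →
        ∑ d ∈ D n, Complex.exp (2 * Real.pi * Complex.I * (d : ℝ) * ((l : ℝ) - (l' : ℝ))
          / (p n : ℝ)) = 0 := by
  intro n hn
  have hp1 := hp n hn
  rcases hT.1 n hn with ⟨N, hN, ⟨q, hq⟩, -, hD⟩ | ⟨a, b, ha, hab, -, hmod, ⟨q, hq⟩, hD⟩ |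
    ⟨d, hd, -, ⟨k, hk⟩, hD⟩
  · have hq0 : 0 < q := by
      rcases Nat.eq_zero_or_pos q with h | h
      · subst h; omega
      · exact h
    refine ⟨(Finset.range N).image (fun k : ℕ => (q : ℤ) * k), ?_, ?_⟩
    · rw [aux_card N q hq0, hD, Finset.card_range]
    · intro l hl l' hl' hne
      obtain ⟨h1, h2⟩ := aux_root N q (by omega) hq0 l l' hl hl' hne
      simp only [aux_pow]
      rw [hD, hq]
      exact aux_geom _ N h1 h2
  · have hq0 : 0 < q := by omega
    refine ⟨(Finset.range 3).image (fun k : ℕ => (q : ℤ) * k), ?_, ?_⟩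
    · rw [aux_card 3 q hq0, hD, Finset.card_eq_three.2]
      exact ⟨0, a, b, by omega, by omega, by omega, rfl⟩
    · intro l hl l' hl' hne
      obtain ⟨h1, h2⟩ := aux_root 3 q (by omega) hq0 l l' hl hl' hne
      simp only [aux_pow]
      rw [hD, hq]
      have h3 := aux_geom _ 3 h1 h2
      generalize Complex.exp (2 * Real.pi * Complex.I * ((l : ℂ) - (l' : ℂ)) /
        ((3 * q : ℕ) : ℂ)) = z at *
      rw [Finset.sum_insert (by simp; omega), Finset.sum_insert (by simp; omega),
        Finset.sum_singleton, pow_eq_pow_mod a h1, pow_eq_pow_mod b h1]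
      simp only [Finset.sum_range_succ, Finset.sum_range_zero] at h3
      rcases hmod with ⟨h, h'⟩ | ⟨h, h'⟩ <;> rw [h, h'] <;> linear_combination h3
  · have hg : 0 < Nat.gcd d (p n) := Nat.gcd_pos_of_pos_left _ hd
    obtain ⟨d', hd'⟩ := Nat.gcd_dvd_left d (p n)
    have hcop := Nat.coprime_div_gcd_div_gcd hg
    have hpn : p n = Nat.gcd d (p n) * (2 * k) := by
      rw [← hk, Nat.mul_div_cancel' (Nat.gcd_dvd_right d (p n))]
    have hdd : d / Nat.gcd d (p n) = d' := Nat.div_eq_of_eq_mul_right hg hd'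
    rw [hdd, hk] at hcop
    have hodd : Odd d' := (Nat.Coprime.coprime_mul_right_right hcop).symm.odd_of_left
    generalize Nat.gcd d (p n) = g at *
    have hk0 : 0 < k := by
      rcases Nat.eq_zero_or_pos k with h | h
      · subst h; omega
      · exact h
    refine ⟨(Finset.range 2).image (fun j : ℕ => (k : ℤ) * j), ?_, ?_⟩
    · rw [aux_card 2 k hk0, hD, Finset.card_pair (by omega)]
    · intro l hl l' hl' hne
      obtain ⟨h1, h2⟩ := aux_root 2 k (by omega) hk0 l l' hl hl' hne
      simp only [aux_pow]
      have hz : Complex.exp (2 * Real.pi * Complex.I * ((l : ℂ) - (l' : ℂ)) / (p n : ℂ)) ^ g =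
          Complex.exp (2 * Real.pi * Complex.I * ((l : ℂ) - (l' : ℂ)) / ((2 * k : ℕ) : ℂ)) := by
        rw [← Complex.exp_nat_mul, hpn]
        congr 1
        have hg0 : (g : ℂ) ≠ 0 := by exact_mod_cast hg.ne'
        have hk1 : (k : ℂ) ≠ 0 := by exact_mod_cast hk0.ne'
        push_cast
        field_simp
      have hm : Complex.exp (2 * Real.pi * Complex.I * ((l : ℂ) - (l' : ℂ)) /
          ((2 * k : ℕ) : ℂ)) = -1 := (eq_or_eq_neg_of_sq_eq_sq _ _ (by rw [h1, one_pow])).resolve_left h2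
      rw [hD, Finset.sum_pair (by omega), pow_zero, hd', pow_mul, hz, hm, hodd.neg_one_pow]
      ring

end
end

section
/- Let f(x,y) = cos x · cos y · cos(x−y), and let (x_n)_{n≥1} and (y_n)_{n≥1} be real sequences such that: (i) x_n y_n > 0, |x_n| < 2π/3 and |y_n| < 2π/3 for all n; (ii) limsup_{n→∞} |x_n| < 2π/3 and limsup_{n→∞} |y_n| < 2π/3. Then inf_{n≥1} (1 + 8·f(x_n, y_n)) > 0. -/
open MeasureTheory Filter Finset Real
open scoped ENNReal NNReal

noncomputable section

theorem aux_bound (u : ℕ → ℝ) (L : ℝ) (h0 : ∀ n, 0 ≤ u n) (hu : ∀ n, u n < L)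
    (hl : Filter.limsup u Filter.atTop < L) : ∃ c < L, ∀ n, u n ≤ c := by
  obtain ⟨c', h1, h2⟩ := exists_between hl
  have hb : Filter.IsBoundedUnder (· ≤ ·) Filter.atTop u :=
    Filter.isBoundedUnder_of ⟨L, fun n => (hu n).le⟩
  have hev := Filter.eventually_lt_of_limsup_lt h1 hb
  obtain ⟨N, hN⟩ := Filter.eventually_atTop.1 hev
  have key : ∀ M : ℕ, ∃ c < L, ∀ n < M, u n ≤ c := by
    intro M
    induction M with
    | zero => exact ⟨c', h2, fun n hn => absurd hn (Nat.not_lt_zero n)⟩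
    | succ k ih =>
      obtain ⟨c, hc, h⟩ := ih
      refine ⟨max c (u k), max_lt hc (hu k), fun n hn => ?_⟩
      rcases Nat.lt_succ_iff_lt_or_eq.1 hn with h' | h'
      · exact le_max_of_le_left (h n h')
      · subst h'
        exact le_max_right _ _
  obtain ⟨c, hc, h⟩ := key N
  refine ⟨max c c', max_lt hc h2, fun n => ?_⟩
  rcases lt_or_ge n N with h' | h'
  · exact le_max_of_le_left (h n h')
  · exact le_max_of_le_right (hN n h').le

theorem aux_cos (a : ℝ) (h0 : 0 ≤ a) (ha : a < 2 * Real.pi / 3) :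
    -(1 / 2) < Real.cos a ∧ 0 ≤ Real.sin a := by
  have hp := Real.pi_pos
  refine ⟨?_, Real.sin_nonneg_of_nonneg_of_le_pi h0 (by linarith)⟩
  have h : Real.cos (2 * Real.pi / 3) = -(1 / 2) := by
    rw [show 2 * Real.pi / 3 = Real.pi - Real.pi / 3 by ring, Real.cos_pi_sub, Real.cos_pi_div_three]
  rw [← h]
  exact Real.cos_lt_cos_of_nonneg_of_le_pi h0 (by linarith) ha

theorem aux_pos (a b : ℝ) (h0 : 0 ≤ a) (ha : a < 2 * Real.pi / 3)
    (h0' : 0 ≤ b) (hb : b < 2 * Real.pi / 3) :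
    0 < 1 + 8 * (Real.cos a * Real.cos b * Real.cos (a - b)) := by
  obtain ⟨h1, h2⟩ := aux_cos a h0 ha
  obtain ⟨h3, h4⟩ := aux_cos b h0' hb
  have e1 := Real.sin_sq_add_cos_sq a
  have e2 := Real.sin_sq_add_cos_sq b
  rw [Real.cos_sub]
  generalize Real.cos a = p at *
  generalize Real.cos b = q at *
  generalize Real.sin a = s at *
  generalize Real.sin b = t at *
  have hst := mul_nonneg h2 h4
  have es : s ^ 2 = 1 - p ^ 2 := by linarith
  have et : t ^ 2 = 1 - q ^ 2 := by linarith
  have id : 1 + 8 * (p * q * (p * q + s * t))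
      = (2 * p ^ 2 + 2 * q ^ 2 - 1) ^ 2 + (2 * s * p + 2 * t * q) ^ 2 := by
    linear_combination (-4 * p ^ 2) * es + (-4 * q ^ 2) * et
  by_contra hcon
  have z1 : 2 * p ^ 2 + 2 * q ^ 2 - 1 = 0 := by
    apply pow_eq_zero_iff (two_ne_zero) |>.1
    nlinarith [sq_nonneg (2 * p ^ 2 + 2 * q ^ 2 - 1), sq_nonneg (2 * s * p + 2 * t * q)]
  have z2 : 2 * s * p + 2 * t * q = 0 := by
    apply pow_eq_zero_iff (two_ne_zero) |>.1
    nlinarith [sq_nonneg (2 * p ^ 2 + 2 * q ^ 2 - 1), sq_nonneg (2 * s * p + 2 * t * q)]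
  have z3 : s ^ 2 * p ^ 2 = t ^ 2 * q ^ 2 := by linear_combination (s * p - t * q) / 2 * z2
  rw [es, et] at z3
  have z4 : p ^ 2 = q ^ 2 := by
    linear_combination 2 * z3 + (p ^ 2 - q ^ 2) * z1
  have hp : p = 1 / 2 := by
    have : (p - 1 / 2) * (p + 1 / 2) = 0 := by linear_combination z1 / 4 + z4 / 2
    rcases mul_eq_zero.1 this with h | h <;> linarith
  have hq : q = 1 / 2 := by
    have : (q - 1 / 2) * (q + 1 / 2) = 0 := by linear_combination z1 / 4 - z4 / 2
    rcases mul_eq_zero.1 this with h | h <;> linarith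
  subst hp hq
  apply hcon
  linarith

/-- Lemma 2.1. If `x_n y_n > 0`, `|x_n|, |y_n| < 2π/3` and the
limsups of `|x_n|`, `|y_n|` are `< 2π/3`, then `inf_n (1 + 8 cos x_n cos y_n cos(x_n - y_n)) > 0`. -/
theorem inf_one_add_eight_f_pos (x y : ℕ → ℝ)
    (hpos : ∀ n, 0 < x n * y n)
    (hx : ∀ n, |x n| < 2 * Real.pi / 3) (hy : ∀ n, |y n| < 2 * Real.pi / 3)
    (hxl : Filter.limsup (fun n => |x n|) Filter.atTop < 2 * Real.pi / 3)
    (hyl : Filter.limsup (fun n => |y n|) Filter.atTop < 2 * Real.pi / 3) :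
    0 < ⨅ n : ℕ, (1 + 8 * (Real.cos (x n) * Real.cos (y n) * Real.cos (x n - y n))) := by
  obtain ⟨c, hc, hxc⟩ := aux_bound _ _ (fun n => abs_nonneg (x n)) hx hxl
  obtain ⟨d, hd, hyd⟩ := aux_bound _ _ (fun n => abs_nonneg (y n)) hy hyl
  have hK : IsCompact (Set.Icc (0 : ℝ) c ×ˢ Set.Icc (0 : ℝ) d) := isCompact_Icc.prod isCompact_Icc
  have hmem : ∀ n, (|x n|, |y n|) ∈ Set.Icc (0 : ℝ) c ×ˢ Set.Icc (0 : ℝ) d := fun n =>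
    ⟨⟨abs_nonneg _, hxc n⟩, ⟨abs_nonneg _, hyd n⟩⟩
  obtain ⟨z, hz, hmin⟩ := hK.exists_isMinOn ⟨_, hmem 0⟩
    (f := fun z : ℝ × ℝ => 1 + 8 * (Real.cos z.1 * Real.cos z.2 * Real.cos (z.1 - z.2)))
    (by fun_prop)
  have hzp := aux_pos z.1 z.2 hz.1.1 (hz.1.2.trans_lt hc) hz.2.1 (hz.2.2.trans_lt hd)
  refine hzp.trans_le (le_ciInf fun n => ?_)
  have h := isMinOn_iff.1 hmin _ (hmem n)
  have e : Real.cos (|x n| - |y n|) = Real.cos (x n - y n) := by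
    rcases mul_pos_iff.1 (hpos n) with ⟨h1, h2⟩ | ⟨h1, h2⟩
    · rw [abs_of_pos h1, abs_of_pos h2]
    · rw [abs_of_neg h1, abs_of_neg h2, ← Real.cos_neg]
      congr 1
      ring
  simp only [Real.cos_abs, e] at h
  exact h

end
end

section
/- Let f(x,y) = cos x · cos y · cos(x−y). Then f(x,y) ≥ −1/8 for all (x,y) ∈ ℝ², and for (x,y) in the region Δ = (−π,π] × (−π,π], equality f(x,y) = −1/8 holds exactly at the eight points (−2π/3, 2π/3), (−π/3, π/3), (π/3, −π/3), (2π/3, −2π/3), (2π/3, π/3), (π/3, 2π/3), (−2π/3, −π/3), (−π/3, −2π/3). -/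
open MeasureTheory Filter Finset Real
open scoped ENNReal NNReal

noncomputable section

lemma cos_aux (x : ℝ) (hx : x ∈ Set.Ioc (-Real.pi) Real.pi) (h : Real.cos (2 * x) = -(1/2)) :
    x = Real.pi / 3 ∨ x = -(Real.pi / 3) ∨ x = 2 * Real.pi / 3 ∨ x = -(2 * Real.pi / 3) := by
  have hp := Real.pi_pos
  have key : |x| = Real.pi / 3 ∨ |x| = Real.pi - Real.pi / 3 := by
    have hm : |x| ∈ Set.Icc 0 Real.pi := ⟨abs_nonneg x, abs_le.2 ⟨hx.1.le, hx.2⟩⟩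
    have h2 : (Real.cos x - 1/2) * (Real.cos x + 1/2) = 0 := by
      rw [Real.cos_two_mul] at h; linarith
    rcases mul_eq_zero.1 h2 with h3 | h3
    · left
      apply Real.injOn_cos hm ⟨by linarith, by linarith⟩
      rw [Real.cos_abs, Real.cos_pi_div_three]; linarith
    · right
      apply Real.injOn_cos hm ⟨by linarith, by linarith⟩
      rw [Real.cos_abs, Real.cos_pi_sub, Real.cos_pi_div_three]; linarith
  rcases key with k | k <;> rcases abs_cases x with ⟨e, _⟩ | ⟨e, _⟩ <;> rw [e] at k
  · left; exact k
  · right; left; linarith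
  · right; right; left; linarith
  · right; right; right; linarith

lemma cos_prod_id (x y : ℝ) : 8 * (Real.cos x * Real.cos y * Real.cos (x - y)) + 1 =
    (2 * Real.cos (x - y) + Real.cos (x + y)) ^ 2 + Real.sin (x + y) ^ 2 := by
  have h1 : 2 * (Real.cos x * Real.cos y) = Real.cos (x - y) + Real.cos (x + y) := by
    rw [Real.cos_sub, Real.cos_add]; ring
  have h2 := Real.sin_sq_add_cos_sq (x + y)
  linear_combination 4 * Real.cos (x - y) * h1 - h2

/-- `f(x,y) = cos x cos y cos(x-y) ≥ -1/8` everywhere, with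
equality on `(-π,π] × (-π,π]` exactly at eight points. -/
theorem cos_prod_min (hf : True) :
    (∀ x y : ℝ, -(1 / 8 : ℝ) ≤ Real.cos x * Real.cos y * Real.cos (x - y)) ∧
    ∀ x y : ℝ, x ∈ Set.Ioc (-Real.pi) Real.pi → y ∈ Set.Ioc (-Real.pi) Real.pi →
      (Real.cos x * Real.cos y * Real.cos (x - y) = -(1 / 8 : ℝ) ↔
        ((x, y) ∈ ({(-(2 * Real.pi / 3), 2 * Real.pi / 3),
                     (-(Real.pi / 3), Real.pi / 3),
                     (Real.pi / 3, -(Real.pi / 3)),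
                     (2 * Real.pi / 3, -(2 * Real.pi / 3)),
                     (2 * Real.pi / 3, Real.pi / 3),
                     (Real.pi / 3, 2 * Real.pi / 3),
                     (-(2 * Real.pi / 3), -(Real.pi / 3)),
                     (-(Real.pi / 3), -(2 * Real.pi / 3))} : Set (ℝ × ℝ)))) := by
  refine ⟨fun x y => ?_, fun x y hx hy => ?_⟩
  · have := cos_prod_id x y
    nlinarith [sq_nonneg (2 * Real.cos (x - y) + Real.cos (x + y)), sq_nonneg (Real.sin (x + y))]
  have hp := Real.pi_pos
  have hid := cos_prod_id x y
  constructor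
  · intro h
    rw [h] at hid
    have hs : Real.sin (x + y) = 0 := by
      nlinarith [sq_nonneg (2 * Real.cos (x - y) + Real.cos (x + y)), sq_nonneg (Real.sin (x + y))]
    have hc : 2 * Real.cos (x - y) + Real.cos (x + y) = 0 := by
      nlinarith [sq_nonneg (2 * Real.cos (x - y) + Real.cos (x + y)), sq_nonneg (Real.sin (x + y))]
    obtain ⟨k, hk⟩ := Real.sin_eq_zero_iff.1 hs
    obtain ⟨hx1, hx2⟩ := hx
    obtain ⟨hy1, hy2⟩ := hy
    have hcx : Real.cos (2 * x) = -(1/2) := by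
      have e : 2 * x = (x - y) + (x + y) := by ring
      have e2 := Real.sin_sq_add_cos_sq (x + y)
      rw [e, Real.cos_add (x - y) (x + y), hs]
      rw [hs] at e2
      linear_combination (1/2) * Real.cos (x + y) * hc - (1/2) * e2
    have k1 : (-2 : ℤ) < k := by
      have : (-2 : ℝ) < k := by nlinarith
      exact_mod_cast this
    have k2 : k < 3 := by
      have : (k : ℝ) < 3 := by nlinarith
      exact_mod_cast this
    simp only [Set.mem_insert_iff, Set.mem_singleton_iff, Prod.mk.injEq]
    have hx4 := cos_aux x ⟨hx1, hx2⟩ hcx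
    interval_cases k <;> push_cast at hk <;> rcases hx4 with e | e | e | e <;>
      first
      | (exfalso; linarith)
      | (have ey : y = Real.pi / 3 := by linarith
         subst e; subst ey; simp; done)
      | (have ey : y = -(Real.pi / 3) := by linarith
         subst e; subst ey; simp; done)
      | (have ey : y = 2 * Real.pi / 3 := by linarith
         subst e; subst ey; simp; done)
      | (have ey : y = -(2 * Real.pi / 3) := by linarith
         subst e; subst ey; simp; done)
  · intro h
    simp only [Set.mem_insert_iff, Set.mem_singleton_iff, Prod.mk.injEq] at h
    have c1 := Real.cos_pi_div_three
    have c2 : Real.cos (2 * Real.pi / 3) = -(1/2) := by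
      rw [show 2 * Real.pi / 3 = Real.pi - Real.pi / 3 by ring, Real.cos_pi_sub, c1]
    have s1 := Real.sin_pi_div_three
    have s2 : Real.sin (2 * Real.pi / 3) = √3 / 2 := by
      rw [show 2 * Real.pi / 3 = Real.pi - Real.pi / 3 by ring, Real.sin_pi_sub, s1]
    have q : √3 * √3 = (3 : ℝ) := Real.mul_self_sqrt (by norm_num)
    rcases h with ⟨e, e'⟩ | ⟨e, e'⟩ | ⟨e, e'⟩ | ⟨e, e'⟩ | ⟨e, e'⟩ | ⟨e, e'⟩ | ⟨e, e'⟩ | ⟨e, e'⟩ <;>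
      rw [Real.cos_sub, e, e'] <;> simp only [Real.cos_neg, Real.sin_neg, c1, c2, s1, s2] <;>
      nlinarith

end
end
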